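/- arXiv:1504.05732 — 2 statements merged into one kernel-verified Lean document; each statement's English description precedes it below -/
import Mathlib

section
/- Let (X, F, μ, T) be a measure-preserving system on a probability space and f ∈ L¹(μ). Then there exists a set X_f ⊆ X of full measure such that for every x ∈ X_f and every t ∈ [0,1), the averages (1/N) ∑_{n=1}^{N} f(Tⁿx) e^{2πint} converge as N → ∞. -/
open MeasureTheory Filter Finset

/-!
For bounded `f` and almost every `x`, the sequence `f (Tⁿ x)` has autocorrelations, by Birkhoff's
theorem. They are the Fourier coefficients of a measure `σ_x` on the circle (Herglotz), and
`σ_{T x} = σ_x`. By van der Corput's inequality and Wiener's formula for the atoms of a measure,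
`limsup |N⁻¹ ∑ f (Tⁿ x) e^{2πinθ}|² ≤ σ_x {-θ}`, so the averages vanish unless `-θ` is an atom.
The map `((x, θ), ω) ↦ ((T x, θ), ω - θ)` preserves the product of Haar measure in `ω` with
`μ(dx) σ_x(dθ)`, and Birkhoff's theorem for it yields convergence at `-θ` for `σ_x`-almost every
`θ`, hence for every atom `θ`. A maximal inequality, uniform over weights bounded by `1`, extends
the result from bounded functions to `L¹`.
-/

open scoped Topology ComplexConjugate ENNReal NNReal

section CesaroMean

variable {E : Type*} [NormedAddCommGroup E] [NormedSpace ℝ E] {u v : ℕ → E} {L : E}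

/-- The mean `N⁻¹ ∑_{n < N} u n` of the first `N` terms of a sequence; it is `0` for `N = 0`. -/
noncomputable def cesaroMean (u : ℕ → E) (N : ℕ) : E :=
  (N : ℝ)⁻¹ • ∑ n ∈ range N, u n

/-- Convergence of the Cesàro means of a sequence. -/
def CesaroConvergent (u : ℕ → E) : Prop :=
  ∃ L, Tendsto (cesaroMean u) atTop (𝓝 L)

theorem cesaroMean_add (u v : ℕ → E) (N : ℕ) :
    cesaroMean (fun n => u n + v n) N = cesaroMean u N + cesaroMean v N := by
  simp only [cesaroMean, sum_add_distrib, smul_add]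

theorem cesaroMean_sub (u v : ℕ → E) (N : ℕ) :
    cesaroMean (fun n => u n - v n) N = cesaroMean u N - cesaroMean v N := by
  simp only [cesaroMean, sum_sub_distrib, smul_sub]

theorem cesaroMean_sum {ι : Type*} (s : Finset ι) (u : ι → ℕ → E) (N : ℕ) :
    cesaroMean (fun n => ∑ i ∈ s, u i n) N = ∑ i ∈ s, cesaroMean (u i) N := by
  simp only [cesaroMean, sum_comm (s := range N), smul_sum]

theorem cesaroMean_smul {𝕜 : Type*} [NormedField 𝕜] [NormedSpace 𝕜 E] [SMulCommClass ℝ 𝕜 E]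
    (c : 𝕜) (u : ℕ → E) (N : ℕ) :
    cesaroMean (fun n => c • u n) N = c • cesaroMean u N := by
  rw [cesaroMean, cesaroMean, ← smul_sum, smul_comm]

theorem cesaroMean_const (L : E) {N : ℕ} (hN : N ≠ 0) : cesaroMean (fun _ => L) N = L := by
  simp [cesaroMean, ← Nat.cast_smul_eq_nsmul ℝ, hN]

theorem cesaroMean_mono {u v : ℕ → ℝ} (h : ∀ n, u n ≤ v n) (N : ℕ) :
    cesaroMean u N ≤ cesaroMean v N := by
  unfold cesaroMean
  gcongr
  exact h _

theorem norm_cesaroMean_le (u : ℕ → E) (N : ℕ) :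
    ‖cesaroMean u N‖ ≤ cesaroMean (fun n => ‖u n‖) N := by
  rw [cesaroMean, cesaroMean, norm_smul, norm_inv, Real.norm_natCast, smul_eq_mul]
  gcongr
  exact norm_sum_le _ _

theorem sq_norm_cesaroMean_le (u : ℕ → E) (N : ℕ) :
    ‖cesaroMean u N‖ ^ 2 ≤ cesaroMean (fun n => ‖u n‖ ^ 2) N := by
  have jensen := sum_div_card_sq_le_sum_sq_div_card (s := range N) (f := fun n => ‖u n‖)
  rw [card_range, div_eq_inv_mul, div_eq_inv_mul] at jensen
  exact (pow_le_pow_left₀ (norm_nonneg _) (norm_cesaroMean_le u N) 2).trans jensen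

theorem cesaroMean_add_index (u : ℕ → E) (N k : ℕ) :
    cesaroMean u (N + k) =
      ((N : ℝ) / ((N : ℝ) + k)) • cesaroMean (fun n => u (n + k)) N +
        ((N : ℝ) + k)⁻¹ • ∑ n ∈ range k, u n := by
  rcases eq_or_ne N 0 with rfl | hN
  · simp [cesaroMean]
  · have : (N : ℝ) ≠ 0 := by exact_mod_cast hN
    rw [cesaroMean, cesaroMean, add_comm N k, sum_range_add, smul_add, smul_smul, add_comm]
    simp only [add_comm k]
    push_cast
    congr 2
    field_simp

theorem tendsto_cesaroMean_comp_add_iff (k : ℕ) :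
    Tendsto (cesaroMean fun n => u (n + k)) atTop (𝓝 L) ↔ Tendsto (cesaroMean u) atTop (𝓝 L) := by
  have initial : Tendsto (fun N : ℕ => ((N : ℝ) + k)⁻¹ • ∑ n ∈ range k, u n) atTop (𝓝 0) := by
    simpa using (tendsto_inv_atTop_zero.comp
      (tendsto_atTop_add_const_right _ (k : ℝ) tendsto_natCast_atTop_atTop)).smul_const
        (∑ n ∈ range k, u n)
  have ratio : Tendsto (fun N : ℕ => (N : ℝ) / ((N : ℝ) + k)) atTop (𝓝 1) :=
    tendsto_natCast_div_add_atTop _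
  rw [← tendsto_add_atTop_iff_nat (f := cesaroMean u) k]
  constructor <;> intro h
  · simpa [cesaroMean_add_index] using (ratio.smul h).add initial
  · have := (ratio.inv₀ one_ne_zero).smul (h.sub initial)
    rw [inv_one, one_smul, sub_zero] at this
    refine this.congr' ?_
    filter_upwards [eventually_ne_atTop 0] with N hN
    have : (N : ℝ) / ((N : ℝ) + k) ≠ 0 := by positivity
    rw [cesaroMean_add_index, add_sub_cancel_right, inv_smul_smul₀ this]

theorem cesaroConvergent_comp_add_iff (k : ℕ) :
    CesaroConvergent (fun n => u (n + k)) ↔ CesaroConvergent u :=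
  exists_congr fun _ => tendsto_cesaroMean_comp_add_iff k

theorem cesaroMean_comp_succ_sub (u : ℕ → E) (N : ℕ) :
    cesaroMean (fun n => u (n + 1)) N - cesaroMean u N = (N : ℝ)⁻¹ • u N - (N : ℝ)⁻¹ • u 0 := by
  rw [cesaroMean, cesaroMean, ← smul_sub, ← sum_sub_distrib, sum_range_sub, smul_sub]

theorem tendsto_inv_smul_of_norm_le {C : ℝ} (hC : ∀ n, ‖u n‖ ≤ C) :
    Tendsto (fun N : ℕ => (N : ℝ)⁻¹ • u N) atTop (𝓝 0) :=
  (tendsto_inv_atTop_nhds_zero_nat (𝕜 := ℝ)).zero_smul_isBoundedUnder_le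
    (isBoundedUnder_of ⟨C, hC⟩)

theorem CesaroConvergent.tendsto_inv_smul (hu : CesaroConvergent u) :
    Tendsto (fun N : ℕ => (N : ℝ)⁻¹ • u N) atTop (𝓝 0) := by
  obtain ⟨L, hL⟩ := hu
  have := (((tendsto_cesaroMean_comp_add_iff 1).2 hL).sub hL).add
    (tendsto_inv_smul_of_norm_le fun _ => le_refl ‖u 0‖)
  simpa [cesaroMean_comp_succ_sub] using this

theorem tendsto_inv_smul_of_tendsto_inv_mul_norm_sq
    (hu : Tendsto (fun N : ℕ => (N : ℝ)⁻¹ * ‖u N‖ ^ 2) atTop (𝓝 0)) :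
    Tendsto (fun N : ℕ => (N : ℝ)⁻¹ • u N) atTop (𝓝 0) := by
  have majorant := hu.add (tendsto_inv_atTop_nhds_zero_nat (𝕜 := ℝ))
  rw [zero_add] at majorant
  refine squeeze_zero_norm (fun N => ?_) majorant
  rw [norm_smul, norm_inv, Real.norm_natCast, ← mul_add_one]
  gcongr
  nlinarith [sq_nonneg (‖u N‖ - 1)]

theorem tendsto_cesaroMean_comp_add_sub (hu : Tendsto (fun N : ℕ => (N : ℝ)⁻¹ • u N) atTop (𝓝 0))
    (k : ℕ) :
    Tendsto (fun N => cesaroMean (fun n => u (n + k)) N - cesaroMean u N) atTop (𝓝 0) := by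
  induction k generalizing u with
  | zero => simp
  | succ k ih =>
    have ratio : Tendsto (fun N : ℕ => ((N : ℝ) / ((N : ℝ) + 1))⁻¹) atTop (𝓝 1) := by
      simpa using (tendsto_natCast_div_add_atTop (1 : ℝ)).inv₀ one_ne_zero
    have hu_succ : Tendsto (fun N : ℕ => (N : ℝ)⁻¹ • u (N + 1)) atTop (𝓝 0) := by
      have := ratio.smul (hu.comp (tendsto_add_atTop_nat 1))
      rw [smul_zero] at this
      refine this.congr fun N => ?_
      rw [Function.comp_apply, smul_smul]
      push_cast
      congr 1
      field_simp
    have first : Tendsto (fun N => cesaroMean (fun n => u (n + 1)) N - cesaroMean u N)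
        atTop (𝓝 0) := by
      simpa [cesaroMean_comp_succ_sub] using
        hu.sub (tendsto_inv_smul_of_norm_le fun _ => le_refl ‖u 0‖)
    simpa [add_assoc] using (ih hu_succ).add first

theorem tendsto_cesaroMean_cesaroMean_comp_add_sub
    (hu : Tendsto (fun N : ℕ => (N : ℝ)⁻¹ • u N) atTop (𝓝 0)) {H : ℕ} (hH : H ≠ 0) :
    Tendsto (fun N => cesaroMean (fun n => cesaroMean (fun h => u (n + h)) H) N - cesaroMean u N)
      atTop (𝓝 0) := by
  have (N : ℕ) : cesaroMean (fun n => cesaroMean (fun h => u (n + h)) H) N - cesaroMean u N =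
      cesaroMean (fun h => cesaroMean (fun n => u (n + h)) N - cesaroMean u N) H := by
    rw [cesaroMean_sub, cesaroMean_const _ hH]
    simp only [cesaroMean, smul_comm (N : ℝ)⁻¹, ← smul_sum, sum_comm (s := range N)]
  simp only [this]
  simpa [cesaroMean] using (tendsto_finsetSum (range H) fun h _ =>
    tendsto_cesaroMean_comp_add_sub hu h).const_smul (H : ℝ)⁻¹

/-- Van der Corput's inequality in the limit. -/
theorem tendsto_cesaroMean_zero_of_tendsto_cesaroMean_norm_sq
    (hu : Tendsto (fun N : ℕ => (N : ℝ)⁻¹ • u N) atTop (𝓝 0)) {b : ℕ → ℝ}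
    (hb : Tendsto b atTop (𝓝 0))
    (hlocal : ∀ H, Tendsto (cesaroMean fun n => ‖cesaroMean (fun h => u (n + h)) H‖ ^ 2) atTop
      (𝓝 (b H))) :
    Tendsto (cesaroMean u) atTop (𝓝 0) := by
  let localMean (H n : ℕ) : E := cesaroMean (fun h => u (n + h)) H
  have bound (H N : ℕ) : ‖cesaroMean u N‖ ≤ ‖cesaroMean (localMean H) N - cesaroMean u N‖ +
      √(cesaroMean (fun n => ‖localMean H n‖ ^ 2) N) := by
    have := norm_sub_le (cesaroMean (localMean H) N) (cesaroMean (localMean H) N - cesaroMean u N)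
    rw [sub_sub_cancel] at this
    linarith [Real.le_sqrt_of_sq_le (sq_norm_cesaroMean_le (localMean H) N)]
  refine tendsto_zero_iff_norm_tendsto_zero.2 (tendsto_order.2 ⟨fun _ hε =>
    Eventually.of_forall fun _ => hε.trans_le (norm_nonneg _), fun ε hε => ?_⟩)
  have hsqrt := hb.sqrt
  rw [Real.sqrt_zero] at hsqrt
  obtain ⟨H, hHε, hH⟩ := ((hsqrt.eventually_lt_const hε).and (eventually_ne_atTop 0)).exists
  have := (tendsto_cesaroMean_cesaroMean_comp_add_sub hu hH).norm.add (hlocal H).sqrt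
  rw [norm_zero, zero_add] at this
  filter_upwards [this.eventually_lt_const hHε] with N hN
  exact (bound H N).trans_lt hN

theorem CesaroConvergent.add (hu : CesaroConvergent u) (hv : CesaroConvergent v) :
    CesaroConvergent fun n => u n + v n := by
  obtain ⟨L, hL⟩ := hu
  obtain ⟨M, hM⟩ := hv
  exact ⟨L + M, (hL.add hM).congr fun N => (cesaroMean_add u v N).symm⟩

theorem CesaroConvergent.of_forall_exists_cesaroMean_norm_sub_le [CompleteSpace E]
    (h : ∀ ε > 0, ∃ v : ℕ → E, CesaroConvergent v ∧
      ∀ N, cesaroMean (fun n => ‖u n - v n‖) N ≤ ε) :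
    CesaroConvergent u := by
  refine cauchySeq_tendsto_of_complete (Metric.cauchySeq_iff.2 fun ε hε => ?_)
  obtain ⟨v, ⟨L, hL⟩, hv⟩ := h (ε / 4) (by positivity)
  obtain ⟨N₀, hN₀⟩ := Metric.cauchySeq_iff.1 hL.cauchySeq (ε / 4) (by positivity)
  have close (N : ℕ) : dist (cesaroMean u N) (cesaroMean v N) ≤ ε / 4 := by
    rw [dist_eq_norm, ← cesaroMean_sub]
    exact (norm_cesaroMean_le _ N).trans (hv N)
  refine ⟨N₀, fun m hm n hn => ?_⟩
  calc dist (cesaroMean u m) (cesaroMean u n)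
      ≤ dist (cesaroMean u m) (cesaroMean v m) + dist (cesaroMean v m) (cesaroMean v n) +
          dist (cesaroMean v n) (cesaroMean u n) := dist_triangle4 _ _ _ _
    _ < ε := by
      linarith [close m, close n, hN₀ m hm n hn, dist_comm (cesaroMean v n) (cesaroMean u n)]

end CesaroMean

section MaximalInequality

variable {X : Type*}

/-- The maximal function `max (0, S₁ f, …, Sₙ f)` of the Birkhoff sums of `f`; the `0` is the
empty Birkhoff sum. -/
noncomputable def birkhoffMax (T : X → X) (f : X → ℝ) (n : ℕ) (x : X) : ℝ :=
  partialSups (fun k => birkhoffSum T f k x) n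

theorem birkhoffSum_le_birkhoffMax (T : X → X) (f : X → ℝ) {k n : ℕ} (h : k ≤ n) (x : X) :
    birkhoffSum T f k x ≤ birkhoffMax T f n x :=
  le_partialSups_of_le (fun k => birkhoffSum T f k x) h

theorem birkhoffMax_sub_comp_le_indicator (T : X → X) (f : X → ℝ) (n : ℕ) (x : X) :
    birkhoffMax T f n x - birkhoffMax T f n (T x) ≤
      {y | 0 < birkhoffMax T f n y}.indicator f x := by
  have nonneg (y : X) : 0 ≤ birkhoffMax T f n y := birkhoffSum_le_birkhoffMax T f n.zero_le y
  by_cases hx : 0 < birkhoffMax T f n x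
  · rw [Set.indicator_of_mem (by exact hx), sub_le_iff_le_add]
    obtain ⟨k, hk, hmax⟩ := exists_partialSups_eq (fun k => birkhoffSum T f k x) n
    cases k with
    | zero => exact absurd hmax hx.ne'
    | succ k =>
      rw [birkhoffMax, hmax, birkhoffSum_succ']
      gcongr
      exact birkhoffSum_le_birkhoffMax T f (Nat.le_of_succ_le hk) (T x)
  · rw [Set.indicator_of_notMem (by exact hx)]
    linarith [nonneg (T x)]

variable [MeasurableSpace X] {μ : Measure X} {T : X → X} {f : X → ℝ}

theorem integral_comp_eq_of_measurePreserving {E : Type*} [NormedAddCommGroup E] [NormedSpace ℝ E]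
    {g : X → E} (hT : MeasurePreserving T μ μ) (hg : AEStronglyMeasurable g μ) :
    ∫ x, g (T x) ∂μ = ∫ x, g x ∂μ := by
  rw [← integral_map hT.aemeasurable (by rwa [hT.map_eq]), hT.map_eq]

theorem integrable_birkhoffMax (hT : MeasurePreserving T μ μ)
    (hf : Integrable f μ) (n : ℕ) : Integrable (birkhoffMax T f n) μ := by
  have sums (k : ℕ) : Integrable (birkhoffSum T f k) μ :=
    integrable_finsetSum _ fun i _ => (hT.iterate i).integrable_comp_of_integrable hf
  induction n with
  | zero => exact sums 0
  | succ n ih =>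
    convert ih.sup (sums (n + 1)) using 1
    ext x
    exact partialSups_succ _ n

theorem nullMeasurableSet_birkhoffMax_pos (hT : MeasurePreserving T μ μ) (hf : Integrable f μ)
    (n : ℕ) : NullMeasurableSet {x | 0 < birkhoffMax T f n x} μ :=
  nullMeasurableSet_lt aemeasurable_const (integrable_birkhoffMax hT hf n).aemeasurable

theorem setIntegral_birkhoffMax_pos_nonneg (hT : MeasurePreserving T μ μ) (hf : Integrable f μ)
    (n : ℕ) : 0 ≤ ∫ x in {x | 0 < birkhoffMax T f n x}, f x ∂μ := by
  have hM := integrable_birkhoffMax hT hf n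
  have hMT : Integrable (fun x => birkhoffMax T f n (T x)) μ := hT.integrable_comp_of_integrable hM
  have hs := nullMeasurableSet_birkhoffMax_pos hT hf n
  calc 0 = ∫ x, (birkhoffMax T f n x - birkhoffMax T f n (T x)) ∂μ := by
        rw [integral_sub hM hMT,
          integral_comp_eq_of_measurePreserving hT hM.aestronglyMeasurable, sub_self]
    _ ≤ ∫ x, {x | 0 < birkhoffMax T f n x}.indicator f x ∂μ :=
        integral_mono (hM.sub hMT) (hf.indicator₀ hs)
          (birkhoffMax_sub_comp_le_indicator T f n)
    _ = ∫ x in {x | 0 < birkhoffMax T f n x}, f x ∂μ := integral_indicator₀ hs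

theorem mul_measureReal_birkhoffMax_pos_le [IsFiniteMeasure μ] (hT : MeasurePreserving T μ μ)
    (hf : Integrable f μ) (c : ℝ) (n : ℕ) :
    c * μ.real {x | 0 < birkhoffMax T (fun y => f y - c) n x} ≤ ∫ x, |f x| ∂μ := by
  have garsia := setIntegral_birkhoffMax_pos_nonneg hT (hf.sub (integrable_const c)) n
  set s := {x | 0 < birkhoffMax T (fun y => f y - c) n x}
  calc c * μ.real s = ∫ _ in s, c ∂μ := by simp [mul_comm]
    _ ≤ ∫ x in s, f x ∂μ := by
        rw [← sub_nonneg, ← integral_sub hf.integrableOn (integrable_const c).integrableOn]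
        exact garsia
    _ ≤ ∫ x in s, |f x| ∂μ :=
        integral_mono hf.integrableOn hf.abs.integrableOn fun x => le_abs_self _
    _ ≤ ∫ x, |f x| ∂μ := setIntegral_le_integral hf.abs (ae_of_all _ fun x => abs_nonneg _)

theorem mul_measureReal_exists_lt_cesaroMean_le [IsFiniteMeasure μ] (hT : MeasurePreserving T μ μ)
    (hf : Integrable f μ) {c : ℝ} (hc : 0 ≤ c) :
    c * μ.real {x | ∃ n, c < cesaroMean (fun k => f (T^[k] x)) n} ≤ ∫ x, |f x| ∂μ := by
  have union : {x | ∃ n, c < cesaroMean (fun k => f (T^[k] x)) n} ⊆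
      ⋃ n, {x | 0 < birkhoffMax T (fun y => f y - c) n x} := by
    rintro x ⟨n, hn⟩
    have hn0 : n ≠ 0 := by rintro rfl; simp [cesaroMean] at hn; linarith
    refine Set.mem_iUnion.2 ⟨n, lt_of_lt_of_le ?_ (birkhoffSum_le_birkhoffMax T _ le_rfl x)⟩
    rw [cesaroMean, smul_eq_mul, lt_inv_mul_iff₀ (by positivity)] at hn
    simpa [birkhoffSum] using hn
  have mono : Monotone fun n => {x | 0 < birkhoffMax T (fun y => f y - c) n x} :=
    fun m n hmn x hx => lt_of_lt_of_le hx
      ((partialSups fun k => birkhoffSum T (fun y => f y - c) k x).monotone hmn)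
  have limit := (ENNReal.tendsto_toReal (by finiteness)).comp
    (tendsto_measure_iUnion_atTop (μ := μ) mono)
  exact (mul_le_mul_of_nonneg_left (measureReal_mono union) hc).trans
    (le_of_tendsto' (limit.const_mul c) (mul_measureReal_birkhoffMax_pos_le hT hf c))

end MaximalInequality

section Birkhoff

variable {X : Type*} [MeasurableSpace X] {μ : Measure X} {T : X → X}
variable {E : Type*} [NormedAddCommGroup E] {f : X → E}

theorem exists_simpleFunc_integral_norm_sub_le (hf : Integrable f μ) {ε : ℝ} (hε : 0 < ε) :
    ∃ g : SimpleFunc X E, Integrable g μ ∧ ∫ x, ‖f x - g x‖ ∂μ ≤ ε := by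
  obtain ⟨g, hclose, hg⟩ := (memLp_one_iff_integrable.2 hf).exists_simpleFunc_eLpNorm_sub_lt
    ENNReal.one_ne_top (ENNReal.ofReal_pos.2 hε).ne'
  have hg := memLp_one_iff_integrable.1 hg
  refine ⟨g, hg, ?_⟩
  rw [eLpNorm_one_eq_lintegral_enorm] at hclose
  exact (integral_norm_eq_lintegral_enorm (hf.sub hg).aestronglyMeasurable).trans_le <|
    ENNReal.toReal_le_of_le_ofReal hε.le hclose.le

theorem ae_exists_forall_cesaroMean_norm_sub_le [IsFiniteMeasure μ] (hT : MeasurePreserving T μ μ)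
    (hf : Integrable f μ) {g : ℕ → X → E} (hg : ∀ k, Integrable (g k) μ)
    (hlim : Tendsto (fun k => ∫ x, ‖f x - g k x‖ ∂μ) atTop (𝓝 0)) :
    ∀ᵐ x ∂μ, ∀ ε > 0, ∃ k, ∀ N,
      cesaroMean (fun n => ‖f (T^[n] x) - g k (T^[n] x)‖) N ≤ ε := by
  let bad (ε : ℝ) (k : ℕ) : Set X :=
    {x | ∃ N, ε < cesaroMean (fun n => ‖f (T^[n] x) - g k (T^[n] x)‖) N}
  have null (ε : ℝ) (hε : 0 < ε) : μ (⋂ k, bad ε k) = 0 := by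
    have bound (k : ℕ) : μ.real (⋂ k, bad ε k) ≤ ε⁻¹ * ∫ x, ‖f x - g k x‖ ∂μ := by
      have weak := mul_measureReal_exists_lt_cesaroMean_le hT (hf.sub (hg k)).norm hε.le
      simp only [Pi.sub_apply, abs_norm] at weak
      rw [← div_eq_inv_mul, le_div_iff₀' hε]
      exact (mul_le_mul_of_nonneg_left (measureReal_mono (Set.iInter_subset _ k)) hε.le).trans weak
    rw [← measureReal_eq_zero_iff]
    have limit := hlim.const_mul ε⁻¹
    rw [mul_zero] at limit
    exact le_antisymm (ge_of_tendsto' limit bound) measureReal_nonneg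
  have all : ∀ᵐ x ∂μ, ∀ m : ℕ, x ∉ ⋂ k, bad (1 / ((m : ℝ) + 1)) k :=
    ae_all_iff.2 fun m => measure_eq_zero_iff_ae_notMem.1 (null _ (by positivity))
  filter_upwards [all] with x hx ε hε
  obtain ⟨m, hm⟩ := exists_nat_one_div_lt hε
  obtain ⟨k, hk⟩ := not_forall.1 fun h => hx m (Set.mem_iInter.2 h)
  exact ⟨k, fun N => (not_lt.1 fun h => hk ⟨N, h⟩).trans hm.le⟩

variable [NormedSpace ℝ E]

theorem ae_cesaroConvergent_of_comp_ae_eq (hT : MeasurePreserving T μ μ)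
    (hf : f ∘ T =ᵐ[μ] f) : ∀ᵐ x ∂μ, CesaroConvergent fun n => f (T^[n] x) := by
  have orbit : ∀ᵐ x ∂μ, ∀ n, f (T (T^[n] x)) = f (T^[n] x) :=
    ae_all_iff.2 fun n => (hT.iterate n).quasiMeasurePreserving.ae hf
  filter_upwards [orbit] with x hx
  have const (n : ℕ) : f (T^[n] x) = f x := by
    induction n with
    | zero => rfl
    | succ n ih => rw [Function.iterate_succ_apply', hx, ih]
  simp only [const]
  exact ⟨f x, tendsto_const_nhds.congr' <| (eventually_ne_atTop 0).mono fun N hN =>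
    (cesaroMean_const (f x) hN).symm⟩

theorem coeFn_birkhoffAverage_compMeasurePreserving {p : ℝ≥0∞}
    (hT : MeasurePreserving T μ μ) (g : Lp E p μ) (N : ℕ) :
    (birkhoffAverage ℝ (Lp.compMeasurePreserving T hT) id N g : Lp E p μ) =ᵐ[μ]
      fun x => cesaroMean (fun n => g (T^[n] x)) N := by
  have iterate : ∀ᵐ x ∂μ, ∀ n : ℕ,
      ((Lp.compMeasurePreserving T hT)^[n] g : Lp E p μ) x = g (T^[n] x) := by
    refine ae_all_iff.2 fun n => ?_
    rw [Lp.compMeasurePreserving_iterate hT n]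
    exact Lp.coeFn_compMeasurePreserving g (hT.iterate n)
  simp only [birkhoffAverage, birkhoffSum, id]
  filter_upwards [iterate, Lp.coeFn_smul (N : ℝ)⁻¹ (∑ n ∈ range N,
    (Lp.compMeasurePreserving T hT)^[n] g), Lp.coeFn_fun_finsetSum (range N) fun n =>
    ((Lp.compMeasurePreserving T hT)^[n] g : Lp E p μ)] with x hiter hsmul hsum
  simp only [cesaroMean, hsmul, Pi.smul_apply, hsum, hiter]

theorem ae_forall_cesaroConvergent_smul_of_approx [IsFiniteMeasure μ] [CompleteSpace E]
    {ι 𝕜 : Type*} [NormedField 𝕜] [NormedSpace 𝕜 E] {w : ι → ℕ → 𝕜} (hw : ∀ i n, ‖w i n‖ ≤ 1)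
    (hT : MeasurePreserving T μ μ) (hf : Integrable f μ)
    (happrox : ∀ ε > 0, ∃ g : X → E, Integrable g μ ∧ ∫ x, ‖f x - g x‖ ∂μ ≤ ε ∧
      ∀ᵐ x ∂μ, ∀ i, CesaroConvergent fun n => w i n • g (T^[n] x)) :
    ∀ᵐ x ∂μ, ∀ i, CesaroConvergent fun n => w i n • f (T^[n] x) := by
  choose g hg hclose hconv using fun k : ℕ => happrox (1 / ((k : ℝ) + 1)) (by positivity)
  have hlim : Tendsto (fun k => ∫ x, ‖f x - g k x‖ ∂μ) atTop (𝓝 0) :=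
    squeeze_zero (fun k => integral_nonneg fun x => norm_nonneg _) hclose
      tendsto_one_div_add_atTop_nhds_zero_nat
  filter_upwards [ae_exists_forall_cesaroMean_norm_sub_le hT hf hg hlim, ae_all_iff.2 hconv]
    with x hx hgx i
  refine CesaroConvergent.of_forall_exists_cesaroMean_norm_sub_le fun ε hε => ?_
  obtain ⟨k, hk⟩ := hx ε hε
  refine ⟨_, hgx k i, fun N => (cesaroMean_mono (fun n => ?_) N).trans (hk N)⟩
  rw [← smul_sub, norm_smul]
  exact mul_le_of_le_one_left (norm_nonneg _) (hw i n)

theorem ae_cesaroConvergent_of_approx [IsFiniteMeasure μ] [CompleteSpace E]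
    (hT : MeasurePreserving T μ μ) (hf : Integrable f μ)
    (happrox : ∀ ε > 0, ∃ g : X → E, Integrable g μ ∧ ∫ x, ‖f x - g x‖ ∂μ ≤ ε ∧
      ∀ᵐ x ∂μ, CesaroConvergent fun n => g (T^[n] x)) :
    ∀ᵐ x ∂μ, CesaroConvergent fun n => f (T^[n] x) := by
  simpa using ae_forall_cesaroConvergent_smul_of_approx (w := fun (_ : Unit) _ => (1 : ℝ))
    (by simp) hT hf (by simpa using happrox)

end Birkhoff

section Hilbert

variable {X : Type*} [MeasurableSpace X] {μ : Measure X} {T : X → X}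
variable {E : Type*} [NormedAddCommGroup E] [InnerProductSpace ℝ E] [CompleteSpace E] {f : X → E}

theorem exists_invariant_tendsto_eLpNorm_cesaroMean_sub (hT : MeasurePreserving T μ μ)
    (hf : MemLp f 2 μ) :
    ∃ p : X → E, MemLp p 2 μ ∧ p ∘ T =ᵐ[μ] p ∧
      Tendsto (fun N => eLpNorm (fun x => cesaroMean (fun n => f (T^[n] x)) N - p x) 2 μ)
        atTop (𝓝 0) := by
  let U : Lp E 2 μ →ₗᵢ[ℝ] Lp E 2 μ := Lp.compMeasurePreservingₗᵢ ℝ T hT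
  have mean_ergodic := U.toContinuousLinearMap.tendsto_birkhoffAverage_orthogonalProjection
    U.norm_toContinuousLinearMap_le (hf.toLp f)
  set P := (U.toContinuousLinearMap.eqLocus (1 : Lp E 2 μ →L[ℝ] Lp E 2 μ)).orthogonalProjectionOnto
    (hf.toLp f)
  refine ⟨P, Lp.memLp _, ?_, ?_⟩
  · have fixed : Lp.compMeasurePreserving T hT (P : Lp E 2 μ) = P := P.2
    exact (Lp.coeFn_compMeasurePreserving (P : Lp E 2 μ) hT).symm.trans (by rw [fixed])
  · rw [Lp.tendsto_Lp_iff_tendsto_eLpNorm'] at mean_ergodic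
    refine mean_ergodic.congr fun N => eLpNorm_congr_ae ?_
    have orbit : ∀ᵐ x ∂μ, ∀ n, hf.toLp f (T^[n] x) = f (T^[n] x) :=
      ae_all_iff.2 fun n => (hT.iterate n).quasiMeasurePreserving.ae hf.coeFn_toLp
    filter_upwards [coeFn_birkhoffAverage_compMeasurePreserving hT (hf.toLp f) N,
      orbit] with x hx horbit
    simp only [← horbit]
    rw [← hx]
    rfl

theorem exists_invariant_tendsto_integral_norm_cesaroMean_sub [IsFiniteMeasure μ]
    (hT : MeasurePreserving T μ μ) (hf : MemLp f 2 μ) :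
    ∃ p : X → E, Integrable p μ ∧ p ∘ T =ᵐ[μ] p ∧
      Tendsto (fun N => ∫ x, ‖cesaroMean (fun n => f (T^[n] x)) N - p x‖ ∂μ) atTop (𝓝 0) := by
  obtain ⟨p, hp, hpT, hlim⟩ := exists_invariant_tendsto_eLpNorm_cesaroMean_sub hT hf
  refine ⟨p, hp.integrable one_le_two, hpT, ?_⟩
  have hdiff (N : ℕ) : MemLp (fun x => cesaroMean (fun n => f (T^[n] x)) N - p x) 2 μ :=
    ((memLp_finsetSum _ fun n _ => hf.comp_measurePreserving (hT.iterate n)).const_smul _).sub hp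
  have norm_eq (N : ℕ) : ∫ x, ‖cesaroMean (fun n => f (T^[n] x)) N - p x‖ ∂μ =
      (eLpNorm (fun x => cesaroMean (fun n => f (T^[n] x)) N - p x) 1 μ).toReal := by
    rw [eLpNorm_one_eq_lintegral_enorm, integral_norm_eq_lintegral_enorm (hdiff N).1]
  simp only [norm_eq]
  rw [ENNReal.tendsto_toReal_zero_iff fun N => ((hdiff N).mono_exponent one_le_two).2.ne]
  have scaled := ENNReal.Tendsto.mul_const
    (b := μ Set.univ ^ (1 / (1 : ℝ≥0∞).toReal - 1 / (2 : ℝ≥0∞).toReal)) hlim (.inr (by norm_num))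
  rw [zero_mul] at scaled
  exact tendsto_of_tendsto_of_tendsto_of_le_of_le tendsto_const_nhds scaled (fun _ => zero_le)
    fun N => eLpNorm_le_eLpNorm_mul_rpow_measure_univ one_le_two (hdiff N).1

theorem ae_cesaroConvergent_of_norm_le [IsFiniteMeasure μ] (hT : MeasurePreserving T μ μ)
    (hf : AEStronglyMeasurable f μ) {C : ℝ} (hC : ∀ x, ‖f x‖ ≤ C) :
    ∀ᵐ x ∂μ, CesaroConvergent fun n => f (T^[n] x) := by
  have hf2 : MemLp f 2 μ := .of_bound hf C (ae_of_all _ hC)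
  have hf1 := hf2.integrable one_le_two
  obtain ⟨p, hp, hpT, hlim⟩ := exists_invariant_tendsto_integral_norm_cesaroMean_sub hT hf2
  refine ae_cesaroConvergent_of_approx hT hf1 fun ε hε => ?_
  obtain ⟨H, hHε, hH⟩ := ((hlim.eventually_lt_const hε).and (eventually_ne_atTop 0)).exists
  let A (x : X) : E := cesaroMean (fun h => f (T^[h] x)) H
  have hA : Integrable A μ :=
    (integrable_finsetSum _ fun h _ => (hT.iterate h).integrable_comp_of_integrable hf1).smul _
  refine ⟨fun x => p x + (f x - A x), hp.add (hf1.sub hA), ?_, ?_⟩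
  · simpa only [← sub_sub, sub_sub_sub_cancel_left, A, sub_add_eq_sub_sub_swap, sub_sub_cancel]
      using hHε.le
  -- `p` is invariant along orbits and `f - A` is a coboundary.
  · filter_upwards [ae_cesaroConvergent_of_comp_ae_eq hT hpT] with x hx
    have telescoping : CesaroConvergent fun n => f (T^[n] x) - A (T^[n] x) := by
      have := tendsto_cesaroMean_cesaroMean_comp_add_sub
        (tendsto_inv_smul_of_norm_le fun n => hC (T^[n] x)) hH
      refine ⟨0, (neg_zero (G := E) ▸ this.neg).congr fun N => ?_⟩
      simp only [neg_sub, cesaroMean_sub, A, ← Function.iterate_add_apply, add_comm]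
    exact hx.add telescoping

theorem ae_cesaroConvergent_of_integrable [IsFiniteMeasure μ] (hT : MeasurePreserving T μ μ)
    (hf : Integrable f μ) :
    ∀ᵐ x ∂μ, CesaroConvergent fun n => f (T^[n] x) := by
  refine ae_cesaroConvergent_of_approx hT hf fun ε hε => ?_
  obtain ⟨g, hg, hclose⟩ := exists_simpleFunc_integral_norm_sub_le hf hε
  obtain ⟨C, hC⟩ := g.exists_forall_norm_le
  exact ⟨g, hg, hclose, ae_cesaroConvergent_of_norm_le hT hg.aestronglyMeasurable hC⟩

end Hilbert

section SpectralMeasure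

open AddCircle

variable {a : ℕ → ℂ} {σ : FiniteMeasure UnitAddCircle}

/-- A finite measure on the circle is a spectral measure of the sequence `a` if its Fourier
coefficients are the autocorrelations `lim N⁻¹ ∑_{n < N} a (n + h) * conj (a n)` of `a`. -/
def IsSpectralMeasure (a : ℕ → ℂ) (σ : FiniteMeasure UnitAddCircle) : Prop :=
  ∀ h : ℕ, Tendsto (cesaroMean fun n => a (n + h) * conj (a n)) atTop
    (𝓝 (∫ θ : UnitAddCircle, fourier h θ ∂σ))

theorem isSpectralMeasure_comp_succ_iff :
    IsSpectralMeasure (fun n => a (n + 1)) σ ↔ IsSpectralMeasure a σ := by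
  refine forall_congr' fun h => ?_
  rw [← tendsto_cesaroMean_comp_add_iff (u := fun n => a (n + h) * conj (a n)) 1]
  simp only [add_right_comm]

theorem integral_fourier_haarAddCircle (n : ℤ) :
    ∫ θ : UnitAddCircle, fourier n θ ∂haarAddCircle = if n = 0 then 1 else 0 := by
  have := congrFun (fourierCoeff_fourier (T := 1) n) 0
  simpa [fourierCoeff, Pi.single_apply, eq_comm] using this

theorem norm_fourier_apply (n : ℤ) (θ : UnitAddCircle) : ‖(fourier n θ : ℂ)‖ = 1 := by
  rw [fourier_apply, Circle.norm_coe]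

theorem norm_integral_fourier_zero (σ : FiniteMeasure UnitAddCircle) :
    ‖∫ θ : UnitAddCircle, fourier (0 : ℕ) θ ∂σ‖ = σ.mass := by
  simp only [Nat.cast_zero, fourier_zero, integral_const, norm_smul, norm_one, mul_one,
    Real.norm_of_nonneg measureReal_nonneg]
  rfl

/-- The density `N⁻¹ |∑_{n < N} a n e^{-2πinθ}|²` of the `N`-th periodogram of `a`. -/
noncomputable def periodogramDensity (a : ℕ → ℂ) (N : ℕ) (θ : UnitAddCircle) : ℝ :=
  (N : ℝ)⁻¹ * ‖∑ n ∈ range N, a n * fourier (-n) θ‖ ^ 2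

theorem continuous_periodogramDensity (a : ℕ → ℂ) (N : ℕ) :
    Continuous (periodogramDensity a N) := by
  unfold periodogramDensity
  fun_prop

theorem periodogramDensity_nonneg (a : ℕ → ℂ) (N : ℕ) (θ : UnitAddCircle) :
    0 ≤ periodogramDensity a N θ := by
  unfold periodogramDensity
  positivity

/-- The `N`-th periodogram of `a`, the measure on the circle whose Fourier coefficients are the
autocorrelations of `a` truncated at time `N`. -/
noncomputable def periodogram (a : ℕ → ℂ) (N : ℕ) : FiniteMeasure UnitAddCircle :=
  ⟨haarAddCircle.withDensity fun θ => ENNReal.ofReal (periodogramDensity a N θ),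
    isFiniteMeasure_withDensity_ofReal
      ((continuous_periodogramDensity a N).integrable_of_hasCompactSupport
        (HasCompactSupport.of_compactSpace _)).2⟩

theorem integral_periodogram (a : ℕ → ℂ) (N : ℕ) (φ : UnitAddCircle → ℂ) :
    ∫ θ : UnitAddCircle, φ θ ∂(periodogram a N) =
      ∫ θ : UnitAddCircle, periodogramDensity a N θ * φ θ ∂haarAddCircle := by
  have hmeas := (continuous_periodogramDensity a N).measurable
  simp only [periodogram, FiniteMeasure.toMeasure_mk]
  rw [integral_withDensity_eq_integral_toReal_smul hmeas.ennreal_ofReal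
    (Eventually.of_forall fun _ => ENNReal.ofReal_lt_top)]
  simp [ENNReal.toReal_ofReal (periodogramDensity_nonneg a N _)]

theorem periodogramDensity_mul_fourier (a : ℕ → ℂ) (N : ℕ) (h : ℤ) (θ : UnitAddCircle) :
    periodogramDensity a N θ * fourier h θ =
      (N : ℂ)⁻¹ * ∑ n ∈ range N, ∑ m ∈ range N,
        a m * conj (a n) * fourier (h + n - m) θ := by
  rw [periodogramDensity]
  push_cast
  rw [← Complex.mul_conj', map_sum, mul_assoc, sum_mul_sum, sum_comm, sum_mul]
  congr 1
  refine sum_congr rfl fun n _ => ?_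
  rw [sum_mul]
  refine sum_congr rfl fun m _ => ?_
  rw [sub_eq_add_neg, fourier_add, fourier_add, map_mul, fourier_neg (n := (n : ℤ)),
    Complex.conj_conj]
  ring

theorem integral_fourier_periodogram (a : ℕ → ℂ) (M h : ℕ) :
    ∫ θ : UnitAddCircle, fourier h θ ∂(periodogram a (M + h)) =
      ((M : ℝ) / (M + h)) • cesaroMean (fun n => a (n + h) * conj (a n)) M := by
  have integrable (c : ℂ) (k : ℤ) :
      Integrable (fun θ : UnitAddCircle => c * fourier k θ) haarAddCircle :=
    (by fun_prop : Continuous _).integrable_of_hasCompactSupport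
      (HasCompactSupport.of_compactSpace _)
  have orthogonality (m n : ℕ) : (h : ℤ) + n - m = 0 ↔ m = n + h := by lia
  have inner (n : ℕ) :
      ∫ θ : UnitAddCircle, ∑ m ∈ range (M + h), a m * conj (a n) * fourier (h + n - m) θ
        ∂haarAddCircle = if n < M then a (n + h) * conj (a n) else 0 := by
    rw [integral_finsetSum _ fun m _ => integrable _ _]
    simp only [integral_const_mul, integral_fourier_haarAddCircle, orthogonality, mul_ite, mul_one,
      mul_zero, sum_ite_eq', mem_range, add_lt_add_iff_right]
  simp only [integral_periodogram, periodogramDensity_mul_fourier, integral_const_mul]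
  rw [integral_finsetSum _ fun n _ => integrable_finsetSum _ fun m _ => integrable _ _]
  simp only [inner]
  rw [sum_range_add, sum_eq_zero (s := range h) (by simp), add_zero,
    sum_congr rfl fun n hn => if_pos (mem_range.1 hn)]
  rcases eq_or_ne M 0 with rfl | hM
  · simp
  · have : (M : ℂ) ≠ 0 := by exact_mod_cast hM
    simp only [cesaroMean, Complex.real_smul]
    push_cast
    field_simp

theorem exists_isSpectralMeasure_iff :
    (∃ σ, IsSpectralMeasure a σ) ↔ ∀ h : ℕ, CesaroConvergent fun n => a (n + h) * conj (a n) := by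
  refine ⟨fun ⟨σ, hσ⟩ h => ⟨_, hσ h⟩, fun ha => ?_⟩
  choose L hL using ha
  have coefficients (h : ℕ) :
      Tendsto (fun N => ∫ θ : UnitAddCircle, fourier h θ ∂(periodogram a N)) atTop (𝓝 (L h)) := by
    rw [← tendsto_add_atTop_iff_nat h, ← one_smul ℝ (L h)]
    simp only [integral_fourier_periodogram]
    exact (tendsto_natCast_div_add_atTop (h : ℝ)).smul (hL h)
  obtain ⟨C, hC⟩ := (coefficients 0).norm.bddAbove_range
  obtain ⟨σ, -, hσ⟩ := (isCompact_setOfPred_finiteMeasure_le_of_compactSpace UnitAddCircle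
    C.toNNReal).exists_mapClusterPt (f := atTop) (u := periodogram a) (tendsto_principal.2
      (Eventually.of_forall fun N => NNReal.coe_le_coe.1 ((norm_integral_fourier_zero _).ge.trans
        ((hC ⟨N, rfl⟩).trans (Real.le_coe_toNNReal C)))))
  have continuous_coefficient (h : ℕ) :
      Continuous fun τ : FiniteMeasure UnitAddCircle => ∫ θ : UnitAddCircle, fourier h θ ∂τ :=
    continuous_iff_continuousAt.2 fun τ =>
      (FiniteMeasure.tendsto_iff_forall_integral_rclike_tendsto ℂ).1 tendsto_id
        (BoundedContinuousFunction.mkOfCompact (fourier h))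
  refine ⟨σ, fun h => ?_⟩
  have cluster := hσ.continuousAt_comp (continuous_coefficient h).continuousAt
  have : ∫ θ : UnitAddCircle, fourier h θ ∂σ = L h :=
    have : NeBot _ := cluster.clusterPt.mono (coefficients h)
    eq_of_nhds_neBot this
  exact this ▸ hL h

theorem IsSpectralMeasure.tendsto_cesaroMean_mul_conj (hσ : IsSpectralMeasure a σ) (h k : ℕ) :
    Tendsto (cesaroMean fun n => a (n + h) * conj (a (n + k))) atTop
      (𝓝 (∫ θ : UnitAddCircle, fourier (h - k : ℤ) θ ∂σ)) := by
  wlog hkh : k ≤ h generalizing h k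
  · have hconj (θ : UnitAddCircle) : fourier (h - k : ℤ) θ = conj (fourier (k - h : ℤ) θ) := by
      rw [← fourier_neg, neg_sub]
    simp only [hconj, integral_conj]
    refine ((this k h (le_of_not_ge hkh)).star).congr fun N => ?_
    simp [cesaroMean, mul_comm]
  · obtain ⟨d, rfl⟩ := Nat.exists_eq_add_of_le hkh
    have := (tendsto_cesaroMean_comp_add_iff k).2 (hσ d)
    simpa [add_assoc, add_comm d k] using this

theorem IsSpectralMeasure.tendsto_cesaroMean_norm_sum_sq (hσ : IsSpectralMeasure a σ)
    (s : Finset ℕ) (c : ℕ → ℂ) :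
    Tendsto (cesaroMean fun n => ‖∑ h ∈ s, c h * a (n + h)‖ ^ 2) atTop
      (𝓝 (∫ θ : UnitAddCircle, ‖∑ h ∈ s, c h * fourier h θ‖ ^ 2 ∂σ)) := by
  have expand (x : ℕ → ℂ) : ((‖∑ h ∈ s, c h * x h‖ ^ 2 : ℝ) : ℂ) =
      ∑ h ∈ s, ∑ k ∈ s, c h * conj (c k) * (x h * conj (x k)) := by
    rw [Complex.ofReal_pow, ← Complex.mul_conj', map_sum, sum_mul_sum]
    simp only [map_mul, mul_mul_mul_comm]
  have integrable (h k : ℕ) : Integrable (fun θ : UnitAddCircle =>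
      c h * conj (c k) * (fourier h θ * conj (fourier k θ))) (σ : Measure UnitAddCircle) :=
    (by fun_prop : Continuous _).integrable_of_hasCompactSupport
      (HasCompactSupport.of_compactSpace _)
  have limit : ((∫ θ : UnitAddCircle, ‖∑ h ∈ s, c h * fourier h θ‖ ^ 2 ∂σ : ℝ) : ℂ) =
      ∑ h ∈ s, ∑ k ∈ s, c h * conj (c k) * ∫ θ : UnitAddCircle, fourier (h - k : ℤ) θ ∂σ := by
    rw [← integral_complex_ofReal]
    simp only [expand]
    rw [integral_finsetSum _ fun h _ => integrable_finsetSum _ fun k _ => integrable _ _]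
    refine sum_congr rfl fun h _ => ?_
    rw [integral_finsetSum _ fun k _ => integrable _ _]
    simp only [integral_const_mul, sub_eq_add_neg, fourier_add, fourier_neg]
  have means (N : ℕ) : ((cesaroMean (fun n => ‖∑ h ∈ s, c h * a (n + h)‖ ^ 2) N : ℝ) : ℂ) =
      ∑ h ∈ s, ∑ k ∈ s,
        c h * conj (c k) * cesaroMean (fun n => a (n + h) * conj (a (n + k))) N := by
    rw [cesaroMean, smul_eq_mul, Complex.ofReal_mul, Complex.ofReal_sum, ← Complex.real_smul]
    simp only [expand]
    rw [← cesaroMean]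
    simp only [cesaroMean_sum, ← smul_eq_mul (c _ * _), cesaroMean_smul]
  rw [← tendsto_ofReal_iff, limit]
  simp only [means]
  exact tendsto_finsetSum _ fun h _ => tendsto_finsetSum _ fun k _ =>
    (hσ.tendsto_cesaroMean_mul_conj h k).const_mul _

theorem IsSpectralMeasure.mass_le (hσ : IsSpectralMeasure a σ) {C : ℝ≥0} (hC : ∀ n, ‖a n‖ ≤ C) :
    σ.mass ≤ C ^ 2 := by
  rw [← NNReal.coe_le_coe, ← norm_integral_fourier_zero]
  refine le_of_tendsto (hσ 0).norm ?_
  filter_upwards [eventually_ne_atTop 0] with N hN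
  calc _ ≤ cesaroMean (fun n => ‖a (n + 0) * conj (a n)‖) N := norm_cesaroMean_le _ N
    _ ≤ cesaroMean (fun _ => (C : ℝ) ^ 2) N := by
      refine cesaroMean_mono (fun n => ?_) N
      rw [add_zero, norm_mul, RCLike.norm_conj, ← sq]
      gcongr
      exact hC n
    _ = _ := by rw [cesaroMean_const _ hN, NNReal.coe_pow]

theorem tendsto_cesaroMean_pow {z : ℂ} (hz : ‖z‖ ≤ 1) :
    Tendsto (cesaroMean fun n => z ^ n) atTop (𝓝 (if z = 1 then 1 else 0)) := by
  split_ifs with h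
  · refine tendsto_const_nhds.congr' ?_
    filter_upwards [eventually_ne_atTop 0] with N hN
    simp only [h, one_pow, cesaroMean_const _ hN]
  · refine tendsto_inv_smul_of_norm_le (C := 2 / ‖z - 1‖) fun N => ?_
    rw [geom_sum_eq h, norm_div]
    gcongr
    calc ‖z ^ N - 1‖ ≤ ‖z‖ ^ N + 1 := by simpa using norm_sub_le (z ^ N) 1
      _ ≤ 2 := by linarith [pow_le_one₀ (n := N) (norm_nonneg z) hz]

theorem tendsto_cesaroMean_fourier (θ : UnitAddCircle) :
    Tendsto (cesaroMean fun n => (fourier n θ : ℂ)) atTop (𝓝 (if θ = 0 then 1 else 0)) := by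
  have := tendsto_cesaroMean_pow (z := toCircle θ) (Circle.norm_coe _).le
  simpa only [← Circle.coe_pow, ← toCircle_nsmul, ← natCast_zsmul, ← fourier_apply,
    Circle.coe_eq_one, (injective_toCircle one_ne_zero).eq_iff' toCircle_zero] using this

theorem tendsto_integral_norm_cesaroMean_fourier_sq (σ : Measure UnitAddCircle)
    [IsFiniteMeasure σ] (θ : UnitAddCircle) :
    Tendsto (fun H => ∫ ω, ‖cesaroMean (fun h => (fourier h (θ + ω) : ℂ)) H‖ ^ 2 ∂σ) atTop
      (𝓝 (σ.real {-θ})) := by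
  have bound (H : ℕ) (ω : UnitAddCircle) :
      ‖cesaroMean (fun h => (fourier h (θ + ω) : ℂ)) H‖ ^ 2 ≤ 1 := by
    refine (sq_norm_cesaroMean_le _ H).trans ?_
    rcases eq_or_ne H 0 with rfl | hH
    · simp [cesaroMean]
    · simp only [norm_fourier_apply, cesaroMean_const _ hH, one_pow, le_refl]
  have limit (ω : UnitAddCircle) :
      Tendsto (fun H => ‖cesaroMean (fun h => (fourier h (θ + ω) : ℂ)) H‖ ^ 2) atTop
        (𝓝 (({-θ} : Set UnitAddCircle).indicator 1 ω)) := by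
    convert (tendsto_cesaroMean_fourier (θ + ω)).norm.pow 2
    simp only [Set.indicator, Set.mem_singleton_iff, eq_neg_iff_add_eq_zero, add_comm ω]
    split_ifs <;> simp
  rw [← integral_indicator_one (measurableSet_singleton _)]
  refine tendsto_integral_of_dominated_convergence (fun _ => 1) (fun H => ?_)
    (integrable_const _) (fun H => Eventually.of_forall fun ω => ?_)
    (Eventually.of_forall limit)
  · refine Continuous.aestronglyMeasurable ?_
    unfold cesaroMean
    fun_prop
  · rw [Real.norm_of_nonneg (by positivity)]
    exact bound H ω

theorem norm_cesaroMean_fourier_mul_comp_add (a : ℕ → ℂ) (θ : UnitAddCircle) (n H : ℕ) :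
    ‖cesaroMean (fun h => fourier (n + h : ℕ) θ * a (n + h)) H‖ =
      ‖∑ h ∈ range H, (H : ℂ)⁻¹ * fourier h θ * a (n + h)‖ := by
  have factor : cesaroMean (fun h => fourier (n + h : ℕ) θ * a (n + h)) H =
      fourier n θ * ∑ h ∈ range H, (H : ℂ)⁻¹ * fourier h θ * a (n + h) := by
    simp only [cesaroMean, mul_sum, smul_sum, Nat.cast_add, fourier_add, Complex.real_smul,
      Complex.ofReal_inv, Complex.ofReal_natCast]
    exact sum_congr rfl fun h _ => by ring
  rw [factor, norm_mul, norm_fourier_apply, one_mul]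

theorem IsSpectralMeasure.tendsto_cesaroMean_fourier_mul (hσ : IsSpectralMeasure a σ)
    {θ : UnitAddCircle} (hθ : (σ : Measure UnitAddCircle) {-θ} = 0) :
    Tendsto (cesaroMean fun n => fourier n θ * a n) atTop (𝓝 0) := by
  have no_atom := tendsto_integral_norm_cesaroMean_fourier_sq (σ : Measure UnitAddCircle) θ
  rw [measureReal_def, hθ, ENNReal.toReal_zero] at no_atom
  refine tendsto_cesaroMean_zero_of_tendsto_cesaroMean_norm_sq ?_ no_atom fun H => ?_
  · refine tendsto_inv_smul_of_tendsto_inv_mul_norm_sq ?_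
    simpa [norm_fourier_apply, ← sq, -fourier_apply] using
      (CesaroConvergent.tendsto_inv_smul ⟨_, hσ 0⟩).norm
  · simp only [norm_cesaroMean_fourier_mul_comp_add]
    convert hσ.tendsto_cesaroMean_norm_sum_sq (range H) fun h => (H : ℂ)⁻¹ * fourier h θ
      using 6 with ω
    simp [cesaroMean, fourier_apply, mul_sum, mul_assoc, toCircle_add]

end SpectralMeasure

section SpectralKernel

open AddCircle

theorem eq_top_of_forall_fourier_mem {T : ℝ} [Fact (0 < T)]
    (P : Submodule ℂ C(AddCircle T, ℂ)) (hP : IsClosed (P : Set C(AddCircle T, ℂ)))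
    (h : ∀ n, fourier n ∈ P) : P = ⊤ := by
  rw [eq_top_iff, ← span_fourier_closure_eq_top]
  exact Submodule.topologicalClosure_minimal _
    (Submodule.span_le.2 (Set.range_subset_iff.2 h)) hP

variable {Y : Type*} [MeasurableSpace Y]

theorem continuous_integral_continuousMap {Ω E : Type*} [TopologicalSpace Ω] [CompactSpace Ω]
    [MeasurableSpace Ω] [BorelSpace Ω] [NormedAddCommGroup E] [NormedSpace ℝ E]
    [SecondCountableTopologyEither Ω E] (ν : Measure Ω) [IsFiniteMeasure ν] :
    Continuous fun φ : C(Ω, E) => ∫ ω, φ ω ∂ν :=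
  (continuous_integral.comp (ContinuousMap.toLp 1 ν ℝ).continuous).congr fun φ =>
    integral_congr_ae (ContinuousMap.coeFn_toLp ν φ)

theorem measurable_toMeasure_of_measurable_lintegral {Ω : Type*} [MeasurableSpace Ω]
    [TopologicalSpace Ω] [BorelSpace Ω] [HasOuterApproxClosed Ω] {m : Y → FiniteMeasure Ω}
    (h : ∀ φ : BoundedContinuousFunction Ω ℝ≥0, Measurable fun y => ∫⁻ ω, φ ω ∂(m y : Measure Ω)) :
    Measurable fun y => (m y : Measure Ω) := by
  have closed (F : Set Ω) (hF : IsClosed F) : Measurable fun y => (m y : Measure Ω) F :=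
    measurable_of_tendsto_metrizable (fun n => h (hF.apprSeq n))
      (tendsto_pi_nhds.2 fun y => HasOuterApproxClosed.tendsto_lintegral_apprSeq hF _)
  exact Measurable.measure_of_isPiSystem
    (BorelSpace.measurable_eq.trans borel_eq_generateFrom_isClosed) isPiSystem_isClosed
    closed (closed _ isClosed_univ)

theorem measurable_toMeasure_of_measurable_integral_fourier {m : Y → FiniteMeasure UnitAddCircle}
    (h : ∀ n : ℕ, Measurable fun y => ∫ θ : UnitAddCircle, fourier n θ ∂(m y)) :
    Measurable fun y => (m y : Measure UnitAddCircle) := by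
  have integrable (y : Y) (φ : C(UnitAddCircle, ℂ)) :
      Integrable φ (m y : Measure UnitAddCircle) :=
    φ.continuous.integrable_of_hasCompactSupport (HasCompactSupport.of_compactSpace _)
  let P : Submodule ℂ C(UnitAddCircle, ℂ) :=
    { carrier := {φ | Measurable fun y => ∫ θ, φ θ ∂(m y : Measure UnitAddCircle)}
      zero_mem' := by simp
      add_mem' := fun {φ ψ} hφ hψ => by
        simpa [integral_add (integrable _ φ) (integrable _ ψ)] using Measurable.fun_add hφ hψ
      smul_mem' := fun c φ hφ => by simpa [integral_const_mul] using hφ.const_mul c }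
  have hP : IsClosed (P : Set C(UnitAddCircle, ℂ)) := by
    refine IsSeqClosed.isClosed fun φ ψ hφ hφψ => ?_
    exact measurable_of_tendsto_metrizable hφ (tendsto_pi_nhds.2 fun y =>
      ((continuous_integral_continuousMap (m y : Measure UnitAddCircle)).tendsto ψ).comp hφψ)
  have fourier_mem (n : ℤ) : fourier n ∈ P := by
    obtain ⟨k, rfl | rfl⟩ := n.eq_nat_or_neg
    · exact h k
    · change Measurable _
      simp only [fourier_neg, integral_conj]
      exact Complex.continuous_conj.measurable.comp (h k)
  refine measurable_toMeasure_of_measurable_lintegral fun φ => ?_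
  have hmem : (⟨fun θ => ((φ θ : ℝ) : ℂ), by fun_prop⟩ : C(UnitAddCircle, ℂ)) ∈ P :=
    eq_top_of_forall_fourier_mem P hP fourier_mem ▸ Submodule.mem_top
  have real_integral (y : Y) : ∫⁻ θ, φ θ ∂(m y : Measure UnitAddCircle) =
      ENNReal.ofReal (∫ θ, ((φ θ : ℝ) : ℂ) ∂(m y : Measure UnitAddCircle)).re := by
    rw [integral_complex_ofReal, Complex.ofReal_re,
      ← BoundedContinuousFunction.toReal_lintegral_coe_eq_integral,
      ENNReal.ofReal_toReal (BoundedContinuousFunction.lintegral_lt_top_of_nnreal _ φ).ne]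
  simp only [real_integral]
  exact (Complex.measurable_re.comp hmem).ennreal_ofReal

open scoped Classical in
/-- The spectral measure of a sequence, which is `0` when some autocorrelation does not exist. -/
noncomputable def spectralMeasure (a : ℕ → ℂ) : FiniteMeasure UnitAddCircle :=
  if h : ∃ σ, IsSpectralMeasure a σ then h.choose else 0

theorem isSpectralMeasure_spectralMeasure {a : ℕ → ℂ} (h : ∃ σ, IsSpectralMeasure a σ) :
    IsSpectralMeasure a (spectralMeasure a) := by
  rw [spectralMeasure, dif_pos h]
  exact h.choose_spec

theorem spectralMeasure_comp_succ (a : ℕ → ℂ) :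
    spectralMeasure (fun n => a (n + 1)) = spectralMeasure a := by
  have : IsSpectralMeasure (fun n => a (n + 1)) = IsSpectralMeasure a :=
    funext fun _ => propext isSpectralMeasure_comp_succ_iff
  rw [spectralMeasure, spectralMeasure, this]

theorem spectralMeasure_mass_le {a : ℕ → ℂ} {C : ℝ≥0} (hC : ∀ n, ‖a n‖ ≤ C) :
    (spectralMeasure a).mass ≤ C ^ 2 := by
  by_cases h : ∃ σ, IsSpectralMeasure a σ
  · exact (isSpectralMeasure_spectralMeasure h).mass_le hC
  · simp [spectralMeasure, dif_neg h]

theorem measurable_spectralMeasure :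
    Measurable fun a => (spectralMeasure a : Measure UnitAddCircle) := by
  classical
  have correlation (h N : ℕ) :
      Measurable fun a : ℕ → ℂ => cesaroMean (fun n => a (n + h) * conj (a n)) N := by
    unfold cesaroMean
    fun_prop
  have domain : MeasurableSet {a | ∃ σ, IsSpectralMeasure a σ} := by
    simp only [exists_isSpectralMeasure_iff, Set.ofPred_forall]
    exact MeasurableSet.iInter fun h => measurableSet_exists_tendsto (correlation h)
  refine measurable_toMeasure_of_measurable_integral_fourier fun h => ?_
  refine measurable_of_tendsto_metrizable
    (f := fun N a => if ∃ σ, IsSpectralMeasure a σ then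
      cesaroMean (fun n => a (n + h) * conj (a n)) N else 0)
    (fun N => Measurable.ite domain (correlation h N) measurable_const)
    (tendsto_pi_nhds.2 fun a => ?_)
  by_cases ha : ∃ σ, IsSpectralMeasure a σ
  · simpa only [if_pos ha] using isSpectralMeasure_spectralMeasure ha h
  · simp [if_neg ha, spectralMeasure, dif_neg ha]

end SpectralKernel

section SkewProduct

open ProbabilityTheory AddCircle

/-- The skew product `((x, θ), ω) ↦ ((T x, θ), ω - θ)`, a rotation by `-θ` over `T`. -/
def circleSkewProduct {X : Type*} (T : X → X) (p : (X × UnitAddCircle) × UnitAddCircle) :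
    (X × UnitAddCircle) × UnitAddCircle :=
  ((T p.1.1, p.1.2), p.2 - p.1.2)

theorem circleSkewProduct_iterate {X : Type*} (T : X → X) (n : ℕ) (x : X) (θ ω : UnitAddCircle) :
    (circleSkewProduct T)^[n] ((x, θ), ω) = ((T^[n] x, θ), ω - n • θ) := by
  induction n with
  | zero => simp
  | succ n ih => simp [circleSkewProduct, Function.iterate_succ_apply', ih, add_smul, sub_sub]

variable {X : Type*} [MeasurableSpace X] {μ : Measure X} {T : X → X}

theorem measurePreserving_prodMap_id_compProd {Y : Type*} [MeasurableSpace Y] [SFinite μ]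
    (hT : MeasurePreserving T μ μ) {κ : Kernel X Y} [IsSFiniteKernel κ]
    (hκ : ∀ x, κ (T x) = κ x) :
    MeasurePreserving (Prod.map T id) (μ ⊗ₘ κ) (μ ⊗ₘ κ) := by
  have hmeas : Measurable (Prod.map T (id : Y → Y)) := hT.measurable.prodMap measurable_id
  refine ⟨hmeas, Measure.ext fun s hs => ?_⟩
  rw [Measure.map_apply hmeas hs, Measure.compProd_apply (hmeas hs), Measure.compProd_apply hs,
    ← hT.lintegral_comp (Kernel.measurable_kernel_prodMk_left hs)]
  simp only [hκ]
  rfl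

theorem quasiMeasurePreserving_fst_compProd {Y : Type*} [MeasurableSpace Y] [SFinite μ]
    {κ : Kernel X Y} [IsSFiniteKernel κ] :
    Measure.QuasiMeasurePreserving Prod.fst (μ ⊗ₘ κ) μ := by
  refine ⟨measurable_fst, Measure.AbsolutelyContinuous.mk fun s hs h => ?_⟩
  rw [Measure.map_apply measurable_fst hs, ← Set.prod_univ, Measure.compProd_apply_prod hs .univ,
    Measure.restrict_eq_zero.2 h, lintegral_zero_measure]

theorem integrable_comp_fst_compProd {Y E : Type*} [MeasurableSpace Y] [NormedAddCommGroup E]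
    [SFinite μ] {κ : Kernel X Y} [IsFiniteKernel κ] {f : X → E} (hf : Integrable f μ) :
    Integrable (fun p : X × Y => f p.1) (μ ⊗ₘ κ) := by
  have hmeas : AEStronglyMeasurable (fun p : X × Y => f p.1) (μ ⊗ₘ κ) :=
    hf.1.comp_quasiMeasurePreserving quasiMeasurePreserving_fst_compProd
  refine (Measure.integrable_compProd_iff hmeas).2
    ⟨Eventually.of_forall fun x => integrable_const (f x), ?_⟩
  simp only [integral_const, smul_eq_mul]
  refine hf.norm.bdd_mul (c := (κ.bound).toReal) ?_ (Eventually.of_forall fun x => ?_)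
  · exact (Kernel.measurable_coe κ .univ).ennreal_toReal.aestronglyMeasurable
  · rw [Real.norm_of_nonneg measureReal_nonneg]
    exact ENNReal.toReal_mono (Kernel.bound_lt_top κ).ne (Kernel.measure_le_bound κ x _)

theorem ae_ae_cesaroConvergent_fourier_mul [IsFiniteMeasure μ] (hT : MeasurePreserving T μ μ)
    {κ : Kernel X UnitAddCircle} [IsFiniteKernel κ] (hκ : ∀ x, κ (T x) = κ x) {f : X → ℂ}
    (hf : Integrable f μ) :
    ∀ᵐ x ∂μ, ∀ᵐ θ ∂κ x, CesaroConvergent fun n => fourier n (-θ) * f (T^[n] x) := by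
  have hskew : MeasurePreserving (circleSkewProduct T) ((μ ⊗ₘ κ).prod haarAddCircle)
      ((μ ⊗ₘ κ).prod haarAddCircle) :=
    (measurePreserving_prodMap_id_compProd hT hκ).skew_product
      (g := fun p ω => ω - p.2) (by fun_prop)
      (Eventually.of_forall fun p => (measurePreserving_sub_right haarAddCircle p.2).map_eq)
  have hF : Integrable (fun p : (X × UnitAddCircle) × UnitAddCircle => f p.1.1 * fourier 1 p.2)
      ((μ ⊗ₘ κ).prod haarAddCircle) :=
    (integrable_comp_fst_compProd hf).mul_prod
      ((fourier 1).continuous.integrable_of_hasCompactSupport (HasCompactSupport.of_compactSpace _))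
  filter_upwards [Measure.ae_ae_of_ae_compProd (Measure.ae_ae_of_ae_prod
    (ae_cesaroConvergent_of_integrable hskew hF))] with x hx
  filter_upwards [hx] with θ hθ
  obtain ⟨ω, L, hL⟩ := hθ.exists
  refine ⟨(fourier 1 ω)⁻¹ * L, (hL.const_mul (fourier 1 ω)⁻¹).congr fun N => ?_⟩
  have hω : (fourier 1 ω : ℂ) ≠ 0 := by simp [fourier_apply]
  rw [← smul_eq_mul, ← cesaroMean_smul]
  congr 1 with n
  have character : fourier 1 (ω - n • θ) = fourier 1 ω * (fourier n (-θ) : ℂ) := by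
    simp [fourier_apply, sub_eq_add_neg, toCircle_add]
  rw [circleSkewProduct_iterate, character, smul_eq_mul, mul_comm (f _), mul_assoc,
    inv_mul_cancel_left₀ hω]

end SkewProduct

section WienerWintner

open ProbabilityTheory

variable {X : Type*} [MeasurableSpace X] {μ : Measure X} {T : X → X} {f : X → ℂ}

theorem ae_exists_isSpectralMeasure_of_bound [IsFiniteMeasure μ] (hT : MeasurePreserving T μ μ)
    (hf : Measurable f) {C : ℝ≥0} (hC : ∀ x, ‖f x‖ ≤ C) :
    ∀ᵐ x ∂μ, ∃ σ, IsSpectralMeasure (fun n => f (T^[n] x)) σ := by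
  simp only [exists_isSpectralMeasure_iff, ae_all_iff]
  intro h
  have integrable : Integrable (fun x => f (T^[h] x) * conj (f x)) μ := by
    refine Integrable.of_bound (C := C * C) ?_ (Eventually.of_forall fun x => ?_)
    · exact ((hf.comp (hT.measurable.iterate h)).mul
        (Complex.continuous_conj.measurable.comp hf)).aestronglyMeasurable
    · rw [norm_mul, RCLike.norm_conj]
      gcongr <;> exact hC _
  simpa only [← Function.iterate_add_apply, add_comm h] using
    ae_cesaroConvergent_of_integrable hT integrable

theorem ae_forall_cesaroConvergent_fourier_mul_of_bound [IsFiniteMeasure μ]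
    (hT : MeasurePreserving T μ μ) (hf : Measurable f) {C : ℝ≥0} (hC : ∀ x, ‖f x‖ ≤ C) :
    ∀ᵐ x ∂μ, ∀ θ : UnitAddCircle, CesaroConvergent fun n => fourier n θ * f (T^[n] x) := by
  let orbit (x : X) (n : ℕ) : ℂ := f (T^[n] x)
  let κ : Kernel X UnitAddCircle :=
    ⟨fun x => spectralMeasure (orbit x),
      measurable_spectralMeasure.comp <| measurable_pi_lambda _ fun n =>
        hf.comp (hT.measurable.iterate n)⟩
  have κ_invariant (x : X) : κ (T x) = κ x :=
    congrArg FiniteMeasure.toMeasure (spectralMeasure_comp_succ (orbit x))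
  have : IsFiniteKernel κ := ⟨(C ^ 2 : ℝ≥0), ENNReal.coe_lt_top, fun x =>
    FiniteMeasure.ennreal_mass.symm.trans_le <|
      ENNReal.coe_le_coe.2 (spectralMeasure_mass_le fun n => hC (T^[n] x))⟩
  filter_upwards [ae_exists_isSpectralMeasure_of_bound hT hf hC,
    ae_ae_cesaroConvergent_fourier_mul hT κ_invariant
      (Integrable.of_bound hf.aestronglyMeasurable C (Eventually.of_forall hC))] with x hσ hκ θ
  by_cases hθ : κ x {-θ} = 0
  · exact ⟨0, (isSpectralMeasure_spectralMeasure hσ).tendsto_cesaroMean_fourier_mul hθ⟩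
  · by_contra hdiv
    refine hθ (measure_mono_null (Set.singleton_subset_iff.2 ?_) hκ)
    simpa using hdiv

theorem wiener_wintner_general [IsFiniteMeasure μ] (hT : MeasurePreserving T μ μ)
    (hf : Integrable f μ) :
    ∀ᵐ x ∂μ, ∀ θ : UnitAddCircle, CesaroConvergent fun n => fourier n θ * f (T^[n] x) := by
  refine ae_forall_cesaroConvergent_smul_of_approx (w := fun (θ : UnitAddCircle) n => fourier n θ)
    (fun θ n => (norm_fourier_apply n θ).le) hT hf fun ε hε => ?_
  obtain ⟨g, hg, hfg⟩ := exists_simpleFunc_integral_norm_sub_le hf hε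
  obtain ⟨C, hC⟩ := g.exists_forall_norm_le
  exact ⟨g, hg, hfg, ae_forall_cesaroConvergent_fourier_mul_of_bound hT g.measurable
    (C := C.toNNReal) fun x => (hC x).trans (Real.le_coe_toNNReal C)⟩

theorem cesaroConvergent_fourier_coe_mul_iff (a : ℕ → ℂ) (t : ℝ) :
    CesaroConvergent (fun n => fourier n (t : UnitAddCircle) * a n) ↔
      ∃ L : ℂ, Tendsto (fun N : ℕ => (N : ℂ)⁻¹ * ∑ n ∈ Finset.range N,
        a (n + 1) * Complex.exp (2 * Real.pi * Complex.I * (n + 1 : ℕ) * t)) atTop (𝓝 L) := by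
  rw [← cesaroConvergent_comp_add_iff 1]
  refine exists_congr fun L => tendsto_congr fun N => ?_
  rw [cesaroMean, Complex.real_smul, Complex.ofReal_inv, Complex.ofReal_natCast]
  congr 1
  refine sum_congr rfl fun n _ => ?_
  rw [fourier_coe_apply, Complex.ofReal_one, div_one, Int.cast_natCast, mul_comm]

end WienerWintner

/-- **Wiener–Wintner ergodic theorem.** For a measure-preserving system on a probability
space and `f ∈ L¹(μ)`, there is a single set of full measure such that for every point `x`
in it and every `t ∈ [0,1)`, the weighted averages
`(1/N) ∑_{n=1}^N f(Tⁿ x) e^{2πint}` converge. -/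
theorem wiener_wintner {X : Type*} [MeasurableSpace X] (μ : Measure X)
    [IsProbabilityMeasure μ] (T : X → X) (hT : MeasurePreserving T μ μ)
    (f : X → ℂ) (hf : Integrable f μ) :
    ∃ Xf : Set X, μ Xfᶜ = 0 ∧ ∀ x ∈ Xf, ∀ t ∈ Set.Ico (0 : ℝ) 1,
      ∃ L : ℂ, Tendsto (fun N : ℕ =>
          (N : ℂ)⁻¹ * ∑ n ∈ Finset.range N,
            f (T^[n + 1] x) * Complex.exp (2 * Real.pi * Complex.I * (n + 1 : ℕ) * t))
        atTop (nhds L) := by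
  refine ⟨_, wiener_wintner_general hT hf, fun x hx t _ => ?_⟩
  exact (cesaroConvergent_fourier_coe_mul_iff (fun n => f (T^[n] x)) t).1 (hx t)
end

section
/- Let (a_n) be a bounded real sequence and k ≥ 1. For h = (h₁,...,h_k) ∈ ℕ^k suppose c_h = lim_N (1/N) ∑_{n=0}^{N-1} ∏_{ε ∈ {0,1}^k} a_{n + ε·h} exists for every h. If additionally the limit lim_H (1/H^k) ∑_{h₁,...,h_k=0}^{H-1} c_h exists, then it is nonnegative. -/
open Filter Finset

/-!
Grouping the vertices of the cube into the two faces orthogonal to a coordinate `l` shows that `c`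
is, as a function of `h l`, an autocorrelation, hence positive definite. Therefore the averages of
`c` against products of tent (Fejér) weights on boxes are nonnegative, and they decrease when the
side lengths are replaced by multiples. Along boxes with sides `m l * i!` they thus converge, as
`i → ∞`, to a limit `β ≥ 0` which does not depend on `m`.

A linear combination of the tents of widths `m s` and `(m + 1) s`, of total mass `1 + 1 / (2 m)`, is
a trapezoid that agrees with the uniform weight on `[1, m s)`. Expanding the product of trapezoids,
the trapezoid averages with `s = i!` converge to `(1 + 1 / (2 m)) ^ k * β ≥ 0`. Positive
definiteness also gives `|c h| ≤ |c 0|`, so the trapezoid averages differ from the uniform ones by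
`O(1 / m)`, asymptotically in `i`. Letting `m → ∞` concludes.
-/

/-- Convergence of the averages of a sequence over the intervals `[0, N)`. -/
def CesaroTendsto (x : ℕ → ℝ) (l : ℝ) : Prop :=
  Tendsto (fun N : ℕ => (N : ℝ)⁻¹ * ∑ n ∈ range N, x n) atTop (nhds l)

namespace CesaroTendsto

variable {κ : Type*} {x : ℕ → ℝ} {l : ℝ}

lemma nonneg (hx : CesaroTendsto x l) (h0 : ∀ n, 0 ≤ x n) : 0 ≤ l :=
  ge_of_tendsto' hx fun N => mul_nonneg (by positivity) (sum_nonneg fun n _ => h0 n)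

lemma const_mul (r : ℝ) (hx : CesaroTendsto x l) : CesaroTendsto (fun n => r * x n) (r * l) := by
  refine (Tendsto.const_mul r hx).congr fun N => ?_
  rw [← mul_sum, mul_left_comm]

lemma sum {T : Finset κ} {x : κ → ℕ → ℝ} {l : κ → ℝ} (h : ∀ i ∈ T, CesaroTendsto (x i) (l i)) :
    CesaroTendsto (fun n => ∑ i ∈ T, x i n) (∑ i ∈ T, l i) := by
  refine (tendsto_finsetSum T h).congr fun N => ?_
  rw [sum_comm, mul_sum]

lemma comp_add_one (hx : CesaroTendsto x l) : CesaroTendsto (fun n => x (n + 1)) l := by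
  have hratio : Tendsto (fun N : ℕ => 1 + (N : ℝ)⁻¹) atTop (nhds 1) := by
    simpa using (tendsto_inv_atTop_nhds_zero_nat (𝕜 := ℝ)).const_add 1
  have hboundary : Tendsto (fun N : ℕ => (N : ℝ)⁻¹ * x 0) atTop (nhds 0) := by
    simpa using (tendsto_inv_atTop_nhds_zero_nat (𝕜 := ℝ)).mul_const (x 0)
  have hlim := (hratio.mul ((tendsto_add_atTop_iff_nat 1).2 hx)).sub hboundary
  rw [one_mul, sub_zero] at hlim
  refine hlim.congr' ((eventually_gt_atTop 0).mono fun N hN => ?_)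
  rw [sum_range_succ']
  push_cast
  field_simp
  ring

lemma comp_add (hx : CesaroTendsto x l) (j : ℕ) : CesaroTendsto (fun n => x (n + j)) l := by
  induction j with
  | zero => exact hx
  | succ j ih => simpa only [add_assoc, add_comm 1] using ih.comp_add_one

end CesaroTendsto

/-- The even extension of `g` to the integers is a positive definite function, i.e. the Toeplitz
matrix `(g |i - j|)` is positive semidefinite. -/
def IsPositiveDefinite (g : ℕ → ℝ) : Prop :=
  (Matrix.of fun i j : ℕ => g (Nat.dist i j)).PosSemidef

section Autocorrelation

variable {F g : ℕ → ℝ}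

lemma CesaroTendsto.mul_comp_add
    (h : ∀ x, CesaroTendsto (fun n => F n * F (n + x)) (g x)) (i j : ℕ) :
    CesaroTendsto (fun n => F (n + i) * F (n + j)) (g (Nat.dist i j)) := by
  wlog hij : i ≤ j generalizing i j
  · simpa only [mul_comm, Nat.dist_comm] using this j i (le_of_not_ge hij)
  · obtain ⟨x, rfl⟩ := Nat.exists_eq_add_of_le hij
    simpa [Nat.dist_eq_sub_of_le, add_assoc] using (h x).comp_add i

theorem isPositiveDefinite_of_cesaroTendsto
    (h : ∀ x, CesaroTendsto (fun n => F n * F (n + x)) (g x)) : IsPositiveDefinite g := by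
  refine ⟨Matrix.IsHermitian.ext fun i j => by simp [Nat.dist_comm], fun u => ?_⟩
  have hlim : CesaroTendsto (fun n => (∑ i ∈ u.support, u i * F (n + i)) ^ 2)
      (∑ i ∈ u.support, ∑ j ∈ u.support, u i * u j * g (Nat.dist i j)) := by
    have hsquare (n : ℕ) : (∑ i ∈ u.support, u i * F (n + i)) ^ 2 =
        ∑ i ∈ u.support, ∑ j ∈ u.support, u i * u j * (F (n + i) * F (n + j)) := by
      simp only [sq, sum_mul_sum, mul_mul_mul_comm]
    simp only [hsquare]
    exact .sum fun i _ => .sum fun j _ => (CesaroTendsto.mul_comp_add h i j).const_mul (u i * u j)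
  simpa [Finsupp.sum, mul_right_comm] using hlim.nonneg fun n => sq_nonneg _

end Autocorrelation

namespace IsPositiveDefinite

variable {g : ℕ → ℝ}

lemma sum_mul_nonneg (hg : IsPositiveDefinite g) {κ : Type*} [Fintype κ] (p : κ → ℕ) (u : κ → ℝ) :
    0 ≤ ∑ i, ∑ j, u i * u j * g (Nat.dist (p i) (p j)) := by
  simpa [dotProduct, Matrix.mulVec, mul_sum, mul_assoc, mul_comm (g _)] using
    (hg.submatrix p).dotProduct_mulVec_nonneg u

lemma abs_le (hg : IsPositiveDefinite g) (x : ℕ) : |g x| ≤ g 0 := by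
  have hsign (r : ℝ) := hg.sum_mul_nonneg ![0, x] ![1, r]
  have hadd := hsign 1
  have hsub := hsign (-1)
  simp only [Fin.sum_univ_two, Matrix.cons_val_zero, Matrix.cons_val_one, Matrix.cons_val_fin_one,
    Nat.dist_self, Nat.dist_zero_left, Nat.dist_zero_right] at hadd hsub
  exact _root_.abs_le.2 ⟨by linarith, by linarith⟩

lemma sum_dist_nonneg (hg : IsPositiveDefinite g) (s : ℕ) :
    0 ≤ ∑ i ∈ range s, ∑ j ∈ range s, g (Nat.dist i j) := by
  simpa [sum_range] using hg.sum_mul_nonneg (fun i : Fin s => (i : ℕ)) 1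

-- Testing positivity against the indicator of one block minus that of the other.
lemma sum_dist_add_le (hg : IsPositiveDefinite g) (p q s : ℕ) :
    ∑ i ∈ range s, ∑ j ∈ range s, g (Nat.dist (p + i) (q + j)) ≤
      ∑ i ∈ range s, ∑ j ∈ range s, g (Nat.dist i j) := by
  have hswap : ∑ i ∈ range s, ∑ j ∈ range s, g (Nat.dist (q + i) (p + j)) =
      ∑ i ∈ range s, ∑ j ∈ range s, g (Nat.dist (p + i) (q + j)) := by
    rw [sum_comm]
    simp only [Nat.dist_comm]
  have hdiff := hg.sum_mul_nonneg (κ := Bool × Fin s)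
    (fun b => bif b.1 then p + b.2 else q + b.2) (fun b => bif b.1 then 1 else -1)
  simp only [Fintype.sum_prod_type, Fintype.sum_bool, cond_true, cond_false, mul_one, mul_neg,
    one_mul, neg_mul, sum_add_distrib, sum_neg_distrib, Nat.dist_add_add_left] at hdiff
  simp only [sum_range] at hswap ⊢
  linarith

end IsPositiveDefinite

lemma sum_range_mul_eq_sum_blocks {M : Type*} [AddCommMonoid M] (f : ℕ → M) (m s : ℕ) :
    ∑ i ∈ range (m * s), f i = ∑ r ∈ range m, ∑ i ∈ range s, f (r * s + i) := by
  induction m with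
  | zero => simp
  | succ m ih => rw [Nat.succ_mul, sum_range_add, ih, sum_range_succ]

lemma IsPositiveDefinite.sum_dist_mul_le {g : ℕ → ℝ} (hg : IsPositiveDefinite g) (m s : ℕ) :
    ∑ i ∈ range (m * s), ∑ j ∈ range (m * s), g (Nat.dist i j) ≤
      (m : ℝ) ^ 2 * ∑ i ∈ range s, ∑ j ∈ range s, g (Nat.dist i j) :=
  calc ∑ i ∈ range (m * s), ∑ j ∈ range (m * s), g (Nat.dist i j)
      = ∑ r ∈ range m, ∑ q ∈ range m, ∑ i ∈ range s, ∑ j ∈ range s,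
          g (Nat.dist (r * s + i) (q * s + j)) := by
        simp only [sum_range_mul_eq_sum_blocks _ m s]
        exact sum_congr rfl fun r _ => sum_comm
    _ ≤ ∑ _r ∈ range m, ∑ _q ∈ range m, ∑ i ∈ range s, ∑ j ∈ range s, g (Nat.dist i j) :=
        sum_le_sum fun r _ => sum_le_sum fun q _ => hg.sum_dist_add_le _ _ s
    _ = (m : ℝ) ^ 2 * ∑ i ∈ range s, ∑ j ∈ range s, g (Nat.dist i j) := by
        simp only [sum_const, card_range, nsmul_eq_mul]
        ring

/-- The number of pairs `(i, j)` in `[0, s) × [0, s)` with `|i - j| = x`. -/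
def tentCount (s x : ℕ) : ℕ :=
  if x = 0 then s else 2 * (s - x)

lemma tentCount_eq_zero_of_le {s x : ℕ} (h : s ≤ x) : tentCount s x = 0 := by
  unfold tentCount
  split_ifs <;> omega

lemma tentCount_le_tentCount_add (q s x : ℕ) : tentCount q x ≤ tentCount (q + s) x := by
  unfold tentCount
  split_ifs <;> omega

lemma tentCount_add_le (q s x : ℕ) : tentCount (q + s) x ≤ tentCount q x + 2 * s := by
  unfold tentCount
  split_ifs <;> omega

lemma tentCount_add_eq {q x : ℕ} (s : ℕ) (hx : x ∈ Ico 1 q) :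
    tentCount (q + s) x = tentCount q x + 2 * s := by
  rw [mem_Ico] at hx
  unfold tentCount
  split_ifs <;> omega

/-- The tent weights: the distribution of `|i - j|` when `i` and `j` are independent and uniform
in `[0, s)`. -/
noncomputable def tent (s x : ℕ) : ℝ :=
  tentCount s x / (s : ℝ) ^ 2

lemma tent_nonneg (s x : ℕ) : 0 ≤ tent s x := by
  unfold tent
  positivity

lemma tent_eq_zero_of_le {s x : ℕ} (h : s ≤ x) : tent s x = 0 := by
  rw [tent, tentCount_eq_zero_of_le h, Nat.cast_zero, zero_div]

lemma sum_dist_range_succ (g : ℕ → ℝ) (s : ℕ) :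
    ∑ i ∈ range (s + 1), ∑ j ∈ range (s + 1), g (Nat.dist i j) =
      ∑ i ∈ range s, ∑ j ∈ range s, g (Nat.dist i j) + 2 * ∑ x ∈ range s, g (x + 1) + g 0 := by
  have hlast : ∑ i ∈ range s, g (Nat.dist i s) = ∑ x ∈ range s, g (x + 1) := by
    rw [← sum_range_reflect]
    refine sum_congr rfl fun i hi => congrArg g ?_
    rw [mem_range] at hi
    unfold Nat.dist
    omega
  simp only [sum_range_succ, sum_add_distrib, Nat.dist_comm s, hlast, Nat.dist_self]
  ring

lemma sum_dist_range_eq (g : ℕ → ℝ) (s : ℕ) :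
    ∑ i ∈ range s, ∑ j ∈ range s, g (Nat.dist i j) =
      s * g 0 + 2 * ∑ x ∈ range s, ((s : ℝ) - (x + 1)) * g (x + 1) := by
  induction s with
  | zero => simp
  | succ s ih =>
    have hstep : ∑ x ∈ range s, (((s + 1 : ℕ) : ℝ) - (x + 1)) * g (x + 1) =
        ∑ x ∈ range s, ((s : ℝ) - (x + 1)) * g (x + 1) + ∑ x ∈ range s, g (x + 1) := by
      rw [← sum_add_distrib]
      refine sum_congr rfl fun x _ => ?_
      push_cast
      ring
    rw [sum_dist_range_succ, ih, sum_range_succ _ s, hstep]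
    push_cast
    ring

lemma sum_tent_mul_eq (g : ℕ → ℝ) (s : ℕ) :
    ∑ x ∈ range s, tent s x * g x =
      (∑ i ∈ range s, ∑ j ∈ range s, g (Nat.dist i j)) / (s : ℝ) ^ 2 := by
  have hextend := sum_range_succ (fun x => tent s x * g x) s
  rw [tent_eq_zero_of_le le_rfl, zero_mul, add_zero] at hextend
  have htail : ∑ x ∈ range s, tent s (x + 1) * g (x + 1) =
      2 * (∑ x ∈ range s, ((s : ℝ) - (x + 1)) * g (x + 1)) / (s : ℝ) ^ 2 := by
    rw [mul_sum, sum_div]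
    refine sum_congr rfl fun x hx => ?_
    rw [tent, tentCount, if_neg x.succ_ne_zero, Nat.cast_mul,
      Nat.cast_sub (Nat.succ_le_of_lt (mem_range.1 hx))]
    push_cast
    ring
  rw [← hextend, sum_range_succ', htail, sum_dist_range_eq, tent, tentCount, if_pos rfl]
  ring

namespace IsPositiveDefinite

variable {g : ℕ → ℝ}

lemma sum_tent_mul_nonneg (hg : IsPositiveDefinite g) (s : ℕ) :
    0 ≤ ∑ x ∈ range s, tent s x * g x := by
  rw [sum_tent_mul_eq]
  exact div_nonneg (hg.sum_dist_nonneg s) (sq_nonneg _)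

lemma sum_tent_mul_le_of_dvd (hg : IsPositiveDefinite g) {s t : ℕ} (hst : s ∣ t) :
    ∑ x ∈ range t, tent t x * g x ≤ ∑ x ∈ range s, tent s x * g x := by
  obtain ⟨m, rfl⟩ := hst
  rcases m.eq_zero_or_pos with rfl | hm
  · simpa using hg.sum_tent_mul_nonneg s
  have hscale : (m : ℝ) ^ 2 ≠ 0 := by positivity
  rw [sum_tent_mul_eq, sum_tent_mul_eq, mul_comm s, Nat.cast_mul, mul_pow,
    ← mul_div_mul_left _ ((s : ℝ) ^ 2) hscale]
  exact div_le_div_of_nonneg_right (hg.sum_dist_mul_le m s) (by positivity)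

end IsPositiveDefinite

section TentMean

variable {ι : Type*} [Fintype ι] [DecidableEq ι]

lemma sum_piFinset_eq_sum_sum_update {α M : Type*} [AddCommMonoid M] (t : ι → Finset α) (l : ι)
    (a : α) (f : (ι → α) → M) :
    ∑ h ∈ Fintype.piFinset t, f h =
      ∑ h ∈ Fintype.piFinset (Function.update t l {a}), ∑ x ∈ t l, f (Function.update h l x) := by
  rw [← sum_product']
  refine sum_nbij' (fun h => (Function.update h l a, h l)) (fun p => Function.update p.1 l p.2)
    (fun h hh => ?_) (fun p hp => ?_) (fun h _ => by simp) (fun p hp => ?_) (fun h _ => by simp)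
  · rw [Fintype.mem_piFinset] at hh
    refine mem_product.2 ⟨Fintype.mem_piFinset.2 fun j => ?_, hh l⟩
    rcases eq_or_ne j l with rfl | hj <;> simp [*]
  · obtain ⟨hp₁, hp₂⟩ := mem_product.1 hp
    refine Fintype.mem_piFinset.2 fun j => ?_
    rcases eq_or_ne j l with rfl | hj
    · simpa using hp₂
    · simpa [hj] using Fintype.mem_piFinset.1 hp₁ j
  · have hbase : p.1 l = a := by simpa using Fintype.mem_piFinset.1 (mem_product.1 hp).1 l
    ext1 <;> simp [← hbase]

/-- The average of `c` over the box `∏ l, [0, s l)` with respect to the product tent weights. -/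
noncomputable def tentMean (c : (ι → ℕ) → ℝ) (s : ι → ℕ) : ℝ :=
  ∑ h ∈ Fintype.piFinset (fun l => range (s l)), (∏ l, tent (s l) (h l)) * c h

lemma tentMean_eq_sum_of_le (c : (ι → ℕ) → ℝ) {s : ι → ℕ} {R : ℕ} (hR : ∀ l, s l ≤ R) :
    tentMean c s =
      ∑ h ∈ Fintype.piFinset (fun _ : ι => range R), (∏ l, tent (s l) (h l)) * c h := by
  refine sum_subset (Fintype.piFinset_subset _ _ fun l => range_mono (hR l)) fun h _ hh => ?_
  obtain ⟨l, hl⟩ : ∃ l, s l ≤ h l := by simpa using hh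
  rw [prod_eq_zero (mem_univ l) (tent_eq_zero_of_le hl), zero_mul]

lemma tentMean_eq_sum_update (c : (ι → ℕ) → ℝ) (s : ι → ℕ) (l : ι) :
    tentMean c s =
      ∑ h ∈ Fintype.piFinset (Function.update (fun j => range (s j)) l {0}),
        (∏ j ∈ univ.erase l, tent (s j) (h j)) *
          ∑ x ∈ range (s l), tent (s l) x * c (Function.update h l x) := by
  rw [tentMean, sum_piFinset_eq_sum_sum_update _ l 0]
  refine sum_congr rfl fun h _ => ?_
  rw [mul_sum]
  refine sum_congr rfl fun x _ => ?_
  rw [← mul_prod_erase univ _ (mem_univ l), Function.update_self]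
  have hothers : ∏ j ∈ univ.erase l, tent (s j) (Function.update h l x j) =
      ∏ j ∈ univ.erase l, tent (s j) (h j) :=
    prod_congr rfl fun j hj => by rw [Function.update_of_ne (ne_of_mem_erase hj)]
  rw [hothers]
  ring

variable {c : (ι → ℕ) → ℝ}

lemma tentMean_nonneg [Nonempty ι]
    (hc : ∀ l h, IsPositiveDefinite fun x => c (Function.update h l x)) (s : ι → ℕ) :
    0 ≤ tentMean c s := by
  obtain ⟨l⟩ := ‹Nonempty ι›
  rw [tentMean_eq_sum_update c s l]
  exact sum_nonneg fun h _ => mul_nonneg (prod_nonneg fun _ _ => tent_nonneg _ _)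
    ((hc l h).sum_tent_mul_nonneg _)

lemma tentMean_update_le_of_dvd {l : ι}
    (hc : ∀ h, IsPositiveDefinite fun x => c (Function.update h l x)) {s : ι → ℕ} {t : ℕ}
    (hst : s l ∣ t) : tentMean c (Function.update s l t) ≤ tentMean c s := by
  have hbox : Function.update (fun j => range (Function.update s l t j)) l {0} =
      Function.update (fun j => range (s j)) l {0} := by
    ext1 j
    rcases eq_or_ne j l with rfl | hj <;> simp [*]
  rw [tentMean_eq_sum_update c s l, tentMean_eq_sum_update c _ l, hbox, Function.update_self]
  refine sum_le_sum fun h _ => ?_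
  have hothers : ∏ j ∈ univ.erase l, tent (Function.update s l t j) (h j) =
      ∏ j ∈ univ.erase l, tent (s j) (h j) :=
    prod_congr rfl fun j hj => by rw [Function.update_of_ne (ne_of_mem_erase hj)]
  rw [hothers]
  exact mul_le_mul_of_nonneg_left ((hc h).sum_tent_mul_le_of_dvd hst)
    (prod_nonneg fun _ _ => tent_nonneg _ _)

lemma tentMean_le_of_dvd (hc : ∀ l h, IsPositiveDefinite fun x => c (Function.update h l x))
    {s t : ι → ℕ} (hst : ∀ l, s l ∣ t l) : tentMean c t ≤ tentMean c s := by
  suffices h : ∀ T : Finset ι, tentMean c (T.piecewise t s) ≤ tentMean c s by simpa using h univ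
  intro T
  induction T using Finset.induction_on with
  | empty => simp
  | insert l T hl ih =>
    rw [piecewise_insert]
    exact (tentMean_update_le_of_dvd (hc l) (by simpa [hl] using hst l)).trans ih

lemma exists_tendsto_tentMean [Nonempty ι]
    (hc : ∀ l h, IsPositiveDefinite fun x => c (Function.update h l x)) :
    ∃ β : ℝ, 0 ≤ β ∧ ∀ m : ι → ℕ, (∀ l, 0 < m l) →
      Tendsto (fun i : ℕ => tentMean c fun l => m l * i.factorial) atTop (nhds β) := by
  have hanti : Antitone fun i : ℕ => tentMean c fun _ => i.factorial :=
    fun i j hij => tentMean_le_of_dvd hc fun _ => Nat.factorial_dvd_factorial hij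
  have hbdd : BddBelow (Set.range fun i : ℕ => tentMean c fun _ => i.factorial) :=
    ⟨0, Set.forall_mem_range.2 fun i => tentMean_nonneg hc _⟩
  have hlim := tendsto_atTop_ciInf hanti hbdd
  refine ⟨_, ge_of_tendsto' hlim fun i => tentMean_nonneg hc _, fun m hm => ?_⟩
  set M := univ.sup m
  refine tendsto_of_tendsto_of_tendsto_of_le_of_le ((tendsto_add_atTop_iff_nat M).2 hlim) hlim
    (fun i => tentMean_le_of_dvd hc fun l => ?_) (fun i => tentMean_le_of_dvd hc fun l => ?_)
  · rw [add_comm]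
    exact (Nat.mul_dvd_mul_right (Nat.dvd_factorial (hm l) (le_sup (mem_univ l))) _).trans
      (Nat.factorial_mul_factorial_dvd_factorial_add M i)
  · exact Nat.dvd_mul_left _ _

lemma sum_prod_sum_tent_mul {κ : Type*} [Fintype κ] (c : (ι → ℕ) → ℝ) (α : κ → ℝ) {S : κ → ℕ}
    {R : ℕ} (hR : ∀ b, S b ≤ R) :
    ∑ h ∈ Fintype.piFinset (fun _ : ι => range R), (∏ l, ∑ b, α b * tent (S b) (h l)) * c h =
      ∑ p : ι → κ, (∏ l, α (p l)) * tentMean c fun l => S (p l) := by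
  simp only [tentMean_eq_sum_of_le c fun _ => hR _, Fintype.prod_sum, sum_mul, mul_sum,
    prod_mul_distrib, mul_assoc]
  exact sum_comm

end TentMean

/-- The weight `(1/2m) ((m + 1) ^ 2 tent_{(m + 1) s} - m ^ 2 tent_{m s})`, which is `1 / (m s)` on
`[1, m s)` and decreases linearly to `0` at `(m + 1) s`: a combination of tent weights that
approximates the uniform weight on `[0, m s)`. -/
noncomputable def trapezoid (m s x : ℕ) : ℝ :=
  (((m : ℝ) + 1) ^ 2 * tent ((m + 1) * s) x - (m : ℝ) ^ 2 * tent (m * s) x) / (2 * m)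

section Trapezoid

variable {m s : ℕ}

lemma mul_trapezoid_eq (hm : 0 < m) (hs : 0 < s) (x : ℕ) :
    ((m * s : ℕ) : ℝ) * trapezoid m s x =
      ((tentCount (m * s + s) x : ℝ) - tentCount (m * s) x) / (2 * s) := by
  rw [trapezoid, tent, tent, ← Nat.succ_mul, Nat.succ_eq_add_one]
  push_cast
  field_simp

lemma mul_trapezoid_nonneg (hm : 0 < m) (hs : 0 < s) (x : ℕ) :
    0 ≤ ((m * s : ℕ) : ℝ) * trapezoid m s x := by
  rw [mul_trapezoid_eq hm hs]
  exact div_nonneg (sub_nonneg.2 (mod_cast tentCount_le_tentCount_add _ s x)) (by positivity)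

lemma mul_trapezoid_le_one (hm : 0 < m) (hs : 0 < s) (x : ℕ) :
    ((m * s : ℕ) : ℝ) * trapezoid m s x ≤ 1 := by
  rw [mul_trapezoid_eq hm hs, div_le_one (by positivity), sub_le_iff_le_add']
  exact_mod_cast tentCount_add_le (m * s) s x

lemma mul_trapezoid_eq_one (hm : 0 < m) (hs : 0 < s) {x : ℕ} (hx : x ∈ Ico 1 (m * s)) :
    ((m * s : ℕ) : ℝ) * trapezoid m s x = 1 := by
  rw [mul_trapezoid_eq hm hs, tentCount_add_eq s hx]
  push_cast
  field_simp
  ring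

end Trapezoid

lemma abs_sum_mul_sub_sum_le {α : Type*} {I B A : Finset α} {v c : α → ℝ} {D : ℝ}
    (hIB : I ⊆ B) (hBA : B ⊆ A) (h0 : ∀ x, 0 ≤ v x) (h1 : ∀ x, v x ≤ 1) (hI : ∀ x ∈ I, v x = 1)
    (hD : ∀ x, |c x| ≤ D) :
    |∑ x ∈ A, v x * c x - ∑ x ∈ B, c x| ≤ D * ((#A : ℝ) - #I) := by
  classical
  have hIA := hIB.trans hBA
  have hdiff : ∑ x ∈ A, v x * c x - ∑ x ∈ B, c x =
      ∑ x ∈ A \ I, (v x - if x ∈ B then 1 else 0) * c x := by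
    have hvanish : ∑ x ∈ I, (v x - if x ∈ B then 1 else 0) * c x = 0 :=
      sum_eq_zero fun x hx => by simp [hI x hx, hIB hx]
    have hsplit := sum_sdiff (f := fun x => (v x - if x ∈ B then 1 else 0) * c x) hIA
    rw [hvanish, add_zero] at hsplit
    rw [hsplit]
    simp [sub_mul, inter_eq_right.2 hBA]
  have hterm (x : α) : |(v x - if x ∈ B then 1 else 0) * c x| ≤ D := by
    have hweight : |v x - if x ∈ B then 1 else 0| ≤ 1 := by
      rw [abs_le]
      split_ifs <;> constructor <;> linarith [h0 x, h1 x]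
    rw [abs_mul]
    exact (mul_le_of_le_one_left (abs_nonneg _) hweight).trans (hD x)
  calc |∑ x ∈ A, v x * c x - ∑ x ∈ B, c x|
      ≤ ∑ x ∈ A \ I, |(v x - if x ∈ B then 1 else 0) * c x| := hdiff ▸ abs_sum_le_sum_abs _ _
    _ ≤ #(A \ I) • D := sum_le_card_nsmul _ _ _ fun x _ => hterm x
    _ = D * ((#A : ℝ) - #I) := by
      rw [nsmul_eq_mul, card_sdiff_of_subset hIA, Nat.cast_sub (card_le_card hIA), mul_comm]

lemma abs_le_abs_apply_zero {ι : Type*} [Finite ι] [DecidableEq ι] {c : (ι → ℕ) → ℝ}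
    (hc : ∀ l h, IsPositiveDefinite fun x => c (Function.update h l x)) (h : ι → ℕ) :
    |c h| ≤ |c 0| := by
  cases nonempty_fintype ι
  suffices hT : ∀ T : Finset ι, |c h| ≤ |c (T.piecewise (0 : ι → ℕ) h)| by simpa using hT univ
  intro T
  induction T using Finset.induction_on with
  | empty => simp
  | insert l T _ ih =>
    rw [piecewise_insert]
    have hstep := (hc l (T.piecewise (0 : ι → ℕ) h)).abs_le (T.piecewise (0 : ι → ℕ) h l)
    rw [Function.update_eq_self] at hstep
    exact ih.trans (hstep.trans (le_abs_self _))

section BoxMean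

variable {ι : Type*} [Fintype ι] [DecidableEq ι] {c : (ι → ℕ) → ℝ}

/-- The average of `c` over the cube `[0, H)^ι`. -/
noncomputable def boxMean (c : (ι → ℕ) → ℝ) (H : ℕ) : ℝ :=
  ((H : ℝ) ^ Fintype.card ι)⁻¹ * ∑ h ∈ Fintype.piFinset (fun _ : ι => range H), c h

/-- The average of `c` with respect to the product trapezoid weights, which approximates the average
over the cube `[0, m * s)^ι`. -/
noncomputable def trapezoidMean (c : (ι → ℕ) → ℝ) (m s : ℕ) : ℝ :=
  ∑ h ∈ Fintype.piFinset (fun _ : ι => range ((m + 1) * s)), (∏ l, trapezoid m s (h l)) * c h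

lemma tendsto_trapezoidMean {β : ℝ} {m : ℕ} (hm : 0 < m)
    (hβ : ∀ m : ι → ℕ, (∀ l, 0 < m l) →
      Tendsto (fun i : ℕ => tentMean c fun l => m l * i.factorial) atTop (nhds β)) :
    Tendsto (fun i : ℕ => trapezoidMean c m i.factorial) atTop
      (nhds ((1 + (2 * m : ℝ)⁻¹) ^ Fintype.card ι * β)) := by
  let α : Bool → ℝ := fun b => bif b then ((m : ℝ) + 1) ^ 2 / (2 * m) else -(m : ℝ) ^ 2 / (2 * m)
  let S : Bool → ℕ := fun b => bif b then m + 1 else m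
  have hS (b : Bool) : 0 < S b ∧ S b ≤ m + 1 := by cases b <;> simp [S, hm]
  have hexpand (s : ℕ) : trapezoidMean c m s =
      ∑ p : ι → Bool, (∏ l, α (p l)) * tentMean c fun l => S (p l) * s := by
    rw [← sum_prod_sum_tent_mul c α fun b => Nat.mul_le_mul_right s (hS b).2, trapezoidMean]
    refine sum_congr rfl fun h _ => congrArg (· * c h) (prod_congr rfl fun l _ => ?_)
    simp only [trapezoid, Fintype.sum_bool, α, S, cond_true, cond_false]
    ring
  have htotal : ∑ p : ι → Bool, (∏ l, α (p l)) * β = (1 + (2 * m : ℝ)⁻¹) ^ Fintype.card ι * β := by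
    have hα : ∑ b, α b = 1 + (2 * m : ℝ)⁻¹ := by
      simp only [Fintype.sum_bool, α, cond_true, cond_false]
      field_simp
      ring
    rw [← sum_mul, ← Fintype.prod_sum, hα, prod_const, card_univ]
  simp only [hexpand, ← htotal]
  exact tendsto_finsetSum _ fun p _ => (hβ _ fun l => (hS (p l)).1).const_mul _

lemma sum_prod_mul_trapezoid_sub_sum (c : (ι → ℕ) → ℝ) (m s : ℕ) {H : ℕ} (hH : 0 < H) :
    ∑ h ∈ Fintype.piFinset (fun _ : ι => range ((m + 1) * s)),
        (∏ l, (H : ℝ) * trapezoid m s (h l)) * c h -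
      ∑ h ∈ Fintype.piFinset (fun _ : ι => range H), c h =
      (H : ℝ) ^ Fintype.card ι * (trapezoidMean c m s - boxMean c H) := by
  have hvol : (H : ℝ) ^ Fintype.card ι ≠ 0 := by positivity
  rw [mul_sub, trapezoidMean, boxMean, mul_inv_cancel_left₀ hvol, mul_sum]
  simp only [prod_mul_distrib, prod_const, card_univ, mul_assoc]

lemma abs_trapezoidMean_sub_boxMean_le {D : ℝ} (hD : ∀ h, |c h| ≤ D) {m s : ℕ} (hm : 0 < m)
    (hs : 0 < s) :
    |trapezoidMean c m s - boxMean c (m * s)| ≤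
      D * ((1 + (m : ℝ)⁻¹) ^ Fintype.card ι -
        (1 - ((m * s : ℕ) : ℝ)⁻¹) ^ Fintype.card ι) := by
  set H := m * s with hH
  have hHpos : 0 < H := Nat.mul_pos hm hs
  have hvol : 0 < (H : ℝ) ^ Fintype.card ι := by positivity
  have houter : (H : ℝ) * (1 + (m : ℝ)⁻¹) = ((m + 1) * s : ℕ) := by
    rw [hH]
    push_cast
    field_simp
  have hinner : (H : ℝ) * (1 - (H : ℝ)⁻¹) = (H - 1 : ℕ) := by
    rw [Nat.cast_pred hHpos]
    field_simp
  have hcount := abs_sum_mul_sub_sum_le (c := c) (D := D)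
    (I := Fintype.piFinset fun _ : ι => Ico 1 H) (B := Fintype.piFinset fun _ : ι => range H)
    (A := Fintype.piFinset fun _ : ι => range ((m + 1) * s))
    (v := fun h => ∏ l, (H : ℝ) * trapezoid m s (h l))
    (Fintype.piFinset_subset _ _ fun _ x hx => mem_range.2 (mem_Ico.1 hx).2)
    (Fintype.piFinset_subset _ _ fun _ => range_mono (Nat.mul_le_mul_right _ m.le_succ))
    (fun h => prod_nonneg fun l _ => mul_trapezoid_nonneg hm hs _)
    (fun h => prod_le_one (fun l _ => mul_trapezoid_nonneg hm hs _)
      fun l _ => mul_trapezoid_le_one hm hs _)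
    (fun h hh => prod_eq_one fun l _ => mul_trapezoid_eq_one hm hs (Fintype.mem_piFinset.1 hh l))
    hD
  rw [sum_prod_mul_trapezoid_sub_sum c m s hHpos, abs_mul, abs_of_pos hvol] at hcount
  refine le_of_mul_le_mul_left (hcount.trans_eq ?_) hvol
  simp only [Fintype.card_piFinset, prod_const, card_univ, card_range, Nat.card_Ico, Nat.cast_pow]
  rw [mul_left_comm, mul_sub ((H : ℝ) ^ _), ← mul_pow, ← mul_pow, houter, hinner]

theorem nonneg_of_tendsto_boxMean [Nonempty ι]
    (hc : ∀ l h, IsPositiveDefinite fun x => c (Function.update h l x)) {L : ℝ}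
    (hL : Tendsto (boxMean c) atTop (nhds L)) : 0 ≤ L := by
  obtain ⟨β, hβ0, hβ⟩ := exists_tendsto_tentMean hc
  have hlower (m : ℕ) (hm : 0 < m) :
      -(|c 0| * ((1 + (m : ℝ)⁻¹) ^ Fintype.card ι - 1)) ≤ L := by
    have hH : Tendsto (fun i : ℕ => m * i.factorial) atTop atTop :=
      tendsto_atTop_mono (fun i => i.self_le_factorial.trans (Nat.le_mul_of_pos_left _ hm))
        tendsto_id
    have herror : Tendsto (fun i : ℕ => |c 0| * ((1 + (m : ℝ)⁻¹) ^ Fintype.card ι -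
        (1 - ((m * i.factorial : ℕ) : ℝ)⁻¹) ^ Fintype.card ι)) atTop
        (nhds (|c 0| * ((1 + (m : ℝ)⁻¹) ^ Fintype.card ι - 1))) := by
      have hinv := tendsto_inv_atTop_nhds_zero_nat (𝕜 := ℝ) |>.comp hH
      simpa using (((hinv.const_sub 1).pow (Fintype.card ι)).const_sub _).const_mul |c 0|
    have hle := le_of_tendsto_of_tendsto' ((tendsto_trapezoidMean hm hβ).sub (hL.comp hH)) herror
      fun i => (le_abs_self _).trans
        (abs_trapezoidMean_sub_boxMean_le (abs_le_abs_apply_zero hc) hm i.factorial_pos)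
    have hmain : 0 ≤ (1 + (2 * m : ℝ)⁻¹) ^ Fintype.card ι * β := by positivity
    linarith
  have hlim : Tendsto (fun m : ℕ => -(|c 0| * ((1 + (m : ℝ)⁻¹) ^ Fintype.card ι - 1))) atTop
      (nhds 0) := by
    have hinv := tendsto_inv_atTop_nhds_zero_nat (𝕜 := ℝ)
    simpa using ((((hinv.const_add 1).pow (Fintype.card ι)).sub_const 1).const_mul |c 0|).neg
  exact le_of_tendsto hlim ((eventually_gt_atTop 0).mono hlower)

end BoxMean

section Cube

variable {ι : Type*} [Fintype ι] [DecidableEq ι]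

/-- The product of `a` over the vertices `n + ε · h`, `ε ∈ {0, 1}^ι`, of a cube. -/
def cubeProd (a : ℕ → ℝ) (h : ι → ℕ) (n : ℕ) : ℝ :=
  ∏ ε : ι → Bool, a (n + ∑ i, if ε i then h i else 0)

lemma cubeProd_update (a : ℕ → ℝ) (h : ι → ℕ) (l : ι) (x n : ℕ) :
    cubeProd a (Function.update h l x) n =
      cubeProd a (fun i : {i // i ≠ l} => h i) n *
        cubeProd a (fun i : {i // i ≠ l} => h i) (n + x) := by
  have hvertex (ε : ι → Bool) : (∑ i, if ε i then Function.update h l x i else 0) =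
      (if ε l then x else 0) + ∑ i : {i // i ≠ l}, if ε i then h i else 0 := by
    rw [Fintype.sum_eq_add_sum_subtype_ne _ l, Function.update_self]
    exact congrArg _ (sum_congr rfl fun i _ => by rw [Function.update_of_ne i.2])
  simp only [cubeProd, hvertex, ← add_assoc]
  refine (Fintype.prod_equiv (Equiv.funSplitAt l Bool) _
    (fun p => a (n + (if p.1 then x else 0) + ∑ i, if p.2 i then h i else 0)) fun ε => rfl).trans ?_
  rw [Fintype.prod_prod_type, Fintype.prod_bool, mul_comm]
  simp

lemma isPositiveDefinite_update_of_cesaroTendsto {a : ℕ → ℝ} {c : (ι → ℕ) → ℝ}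
    (hc : ∀ h, CesaroTendsto (cubeProd a h) (c h)) (l : ι) (h : ι → ℕ) :
    IsPositiveDefinite fun x => c (Function.update h l x) :=
  isPositiveDefinite_of_cesaroTendsto (F := cubeProd a fun i : {i // i ≠ l} => h i) fun x => by
    simpa only [← cubeProd_update] using hc (Function.update h l x)

end Cube

theorem local_seminorm_nonneg_general {ι : Type*} [Fintype ι] [DecidableEq ι] [Nonempty ι]
    (a : ℕ → ℝ) (c : (ι → ℕ) → ℝ)
    (hc : ∀ h : ι → ℕ, Tendsto (fun N : ℕ =>
        (N : ℝ)⁻¹ * ∑ n ∈ Finset.range N,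
          ∏ ε : ι → Bool, a (n + ∑ i, if ε i then h i else 0))
      atTop (nhds (c h)))
    (L : ℝ)
    (hL : Tendsto (fun H : ℕ =>
        ((H : ℝ) ^ Fintype.card ι)⁻¹ *
          ∑ h ∈ Fintype.piFinset (fun _ : ι => Finset.range H), c h)
      atTop (nhds L)) :
    0 ≤ L :=
  nonneg_of_tendsto_boxMean (isPositiveDefinite_update_of_cesaroTendsto hc) hL

/-- If, for a bounded real sequence `a`, all the cube correlation limits
`c_h = lim_N (1/N) ∑_{n<N} ∏_{ε ∈ {0,1}^k} a_{n+ε·h}` exist, and the averages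
`(1/H^k) ∑_{h ∈ [0,H)^k} c_h` converge, then their limit is nonnegative. -/
theorem local_seminorm_nonneg (k : ℕ) (hk : 1 ≤ k) (a : ℕ → ℝ)
    (hbd : ∃ C : ℝ, ∀ n, |a n| ≤ C) (c : (Fin k → ℕ) → ℝ)
    (hc : ∀ h : Fin k → ℕ, Tendsto (fun N : ℕ =>
        (N : ℝ)⁻¹ * ∑ n ∈ Finset.range N,
          ∏ ε : Fin k → Bool, a (n + ∑ i, if ε i then h i else 0))
      atTop (nhds (c h)))
    (L : ℝ)
    (hL : Tendsto (fun H : ℕ =>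
        ((H : ℝ) ^ k)⁻¹ * ∑ h ∈ Fintype.piFinset (fun _ : Fin k => Finset.range H), c h)
      atTop (nhds L)) :
    0 ≤ L :=
  have : Nonempty (Fin k) := ⟨⟨0, hk⟩⟩
  local_seminorm_nonneg_general a c hc L (by simpa only [Fintype.card_fin] using hL)
end
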